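/- arXiv:2110.13886 — 2 statements merged into one kernel-verified Lean document; each statement's English description precedes it below -/
import Mathlib

section
/- For every integer e ≥ 5 and each i ∈ {2,3}, there exists a finite group G of order 3^{7+e} whose abelianization is isomorphic to (ZMod (3^e)) × (ZMod 3), which admits an automorphism σ such that for every g ∈ G the image of σ(g) in the abelianization equals the inverse of the image of g, whose second derived subgroup G'' is nontrivial and whose third derived subgroup is trivial (derived length exactly 3), and whose quotient G/G'' is isomorphic to a metabelian group of order 3^{6+e} generated by x, y satisfying w^3 = 1, y^3 = s₅, s₂^3 = s₄^2 s₅, s₃^3 = s₅^2, t₃ = s₃ w^{i-1}, t₄ = s₄, t₅ = s₅. -/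
/-- The commutator `[a,b] = a⁻¹ * b⁻¹ * a * b`. -/
def comm' {G : Type*} [Group G] (a b : G) : G := a⁻¹ * b⁻¹ * a * b

/-- `s₂ = [y,x]` and `s_j = [s_(j-1), x]` for `j ≥ 3`. -/
def sgen {G : Type*} [Group G] (x y : G) : ℕ → G
  | 0 => 1
  | 1 => 1
  | 2 => comm' y x
  | (n + 3) => comm' (sgen x y (n + 2)) x

/-- `t_j = [s_(j-1), y]` for `j ≥ 3`. -/
def tgenD {G : Type*} [Group G] (x y : G) (j : ℕ) : G := comm' (sgen x y (j - 1)) y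

/-- `t₂ = [y,x]` and `t_j = [t_(j-1), y]` for `j ≥ 3`. -/
def tgenB {G : Type*} [Group G] (x y : G) : ℕ → G
  | 0 => 1
  | 1 => 1
  | 2 => comm' y x
  | (n + 3) => comm' (tgenB x y (n + 2)) y

/-- A σ-group: a group admitting an automorphism acting as inversion on the
abelianization. -/
def IsSigmaGroup (G : Type*) [Group G] : Prop :=
  ∃ σ : G ≃* G, ∀ g : G, Abelianization.of (σ g) = (Abelianization.of g)⁻¹

/-- A group is metabelian if its commutator subgroup is abelian, i.e. the second
derived subgroup is trivial. -/
def IsMetabelian (G : Type*) [Group G] : Prop := derivedSeries G 2 = ⊥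

/-!
Let `R = ℤ[N] / (N² + 3 N - 6, 27, 9 N)`, of order `3 ^ 5`. The unit `1 + N` has order `3`, is
congruent to `1` modulo the maximal ideal, and preserves the determinant form on coordinates modulo
`9`. The group `G` consists of the pairs `(a, c)` in `R × ZMod (3 ^ (e + 2))`, multiplied as in a
Heisenberg group whose form has its values embedded as the subgroup of order `9`, except that
`(a, c)` acts on `R` as the power of `1 + N` whose exponent is the residue of `a` plus that of `c`.
This exponent is a character of `G` and vanishes on `G'`. Consequently a commutator of two elements
of `G'` is `(0, 2 ⟨a, b⟩)`, and as `a` and `b` lie in the maximal ideal, `⟨a, b⟩` is divisible by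
`3`: so `G''` has order `3` and `G'''` is trivial. The conjugation `N ↦ -3 - N` inverts `1 + N` up
to a correction in `9 R`, and its negative extends to the σ-automorphism. Reducing the fibre modulo
`3 ^ (e + 1)` kills exactly `G''`, and in the quotient the relations are evaluated at `x = (0, 1)`
and `y = (1, c)`, with `3 c` a value of the form so that `y ^ 3` has trivial fibre coordinate.
-/

open scoped commutatorElement

/-- A biadditive alternating form `A × A → V` invariant under an action of `J` on `A`, together
with a `J`-invariant `J`-valued degree on `A`. This is the part of the data of a
`TwistedHeisenberg` group that does not involve its central coordinate. -/
structure InvariantForm (J A V : Type*) [AddCommGroup J] [AddCommGroup A] [AddCommGroup V] where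
  act : AddChar J (AddMonoid.End A)
  form : A →+ A →+ V
  degree : A →+ J
  form_self : ∀ a, form a a = 0
  form_act : ∀ j a b, form (act j a) (act j b) = form a b
  degree_act : ∀ j a, degree (act j a) = degree a

/-- A group `C` receiving the values `V` of an `InvariantForm`, with a `J`-valued degree on `C`
that vanishes on them. This supplies the fibre coordinate of a `TwistedHeisenberg` group. -/
structure ValueGroup (J V C : Type*) [AddCommGroup J] [AddCommGroup V] [AddCommGroup C] where
  ofValue : V →+ C
  degree : C →+ J
  degree_ofValue : ∀ v, degree (ofValue v) = 0

/-- The Heisenberg extension of `A` by `C` attached to the form of `S`, in which `(a, c)` moreover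
acts through the element `deg a + deg c` of `J`:
`(a, c) (a', c') = (a + j • a', c + c' + ⟨a, j • a'⟩)` with `j = deg a + deg c`. -/
@[ext]
structure TwistedHeisenberg {J A V C : Type*} [AddCommGroup J] [AddCommGroup A] [AddCommGroup V]
    [AddCommGroup C] (S : InvariantForm J A V) (E : ValueGroup J V C) where
  base : A
  fibre : C

namespace InvariantForm

variable {J A V W : Type*} [AddCommGroup J] [AddCommGroup A] [AddCommGroup V] [AddCommGroup W]
  (S : InvariantForm J A V)

lemma act_act (i j : J) (a : A) : S.act i (S.act j a) = S.act (i + j) a := by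
  rw [AddChar.map_add_eq_mul, AddMonoid.End.coe_mul, Function.comp_apply]

lemma act_zero (a : A) : S.act 0 a = a := by
  rw [AddChar.map_zero_eq_one, AddMonoid.End.coe_one, id]

lemma form_swap (a b : A) : S.form b a = -S.form a b := by
  have h := S.form_self (a + b)
  simp only [map_add, AddMonoidHom.add_apply, form_self, zero_add, add_zero] at h
  exact eq_neg_of_add_eq_zero_left h

/-- The form with its values transported along a homomorphism. -/
def mapForm (f : V →+ W) : InvariantForm J A W where
  act := S.act
  form := S.form.compr₂ f
  degree := S.degree
  form_self a := by simp [S.form_self]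
  form_act j a b := by simp [S.form_act]
  degree_act := S.degree_act

/-- The `InvariantForm` for the action of `ZMod n` on `A` given by an automorphism `T` with
`T ^ n = 1`. -/
def ofGenerator {n : ℕ} [NeZero n] (T : AddMonoid.End A) (hT : T ^ n = 1) (form : A →+ A →+ V)
    (degree : A →+ ZMod n) (form_self : ∀ a, form a a = 0)
    (form_T : ∀ a b, form (T a) (T b) = form a b) (degree_T : ∀ a, degree (T a) = degree a) :
    InvariantForm (ZMod n) A V where
  act :=
    { toFun := fun j => T ^ j.val
      map_zero_eq_one' := by rw [ZMod.val_zero, pow_zero]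
      map_add_eq_mul' := fun i j => by rw [ZMod.val_add, ← pow_eq_pow_mod _ hT, pow_add] }
  form := form
  degree := degree
  form_self := form_self
  form_act j a b := by
    simp only [AddChar.coe_mk]
    induction j.val with
    | zero => rfl
    | succ m ih => simp only [pow_succ', AddMonoid.End.coe_mul, Function.comp_apply, form_T, ih]
  degree_act j a := by
    simp only [AddChar.coe_mk]
    induction j.val with
    | zero => rfl
    | succ m ih => simp only [pow_succ', AddMonoid.End.coe_mul, Function.comp_apply, degree_T, ih]

lemma semiconj_act_of_one {n : ℕ} [NeZero n] (S : InvariantForm (ZMod n) A V)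
    {θ : AddMonoid.End A} (h : SemiconjBy θ (S.act 1) (S.act (-1))) (j : ZMod n) :
    SemiconjBy θ (S.act j) (S.act (-j)) := by
  simpa only [← AddChar.map_nsmul_eq_pow, smul_neg, nsmul_one, ZMod.natCast_zmod_val]
    using h.pow_right j.val

end InvariantForm

namespace TwistedHeisenberg

variable {J A V C : Type*} [AddCommGroup J] [AddCommGroup A] [AddCommGroup V] [AddCommGroup C]
  {S : InvariantForm J A V} {E : ValueGroup J V C}

/-- The element of `J` through which a group element acts on the base. -/
def degree (g : TwistedHeisenberg S E) : J := S.degree g.base + E.degree g.fibre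

instance : Mul (TwistedHeisenberg S E) where
  mul g h := ⟨g.base + S.act g.degree h.base,
    g.fibre + h.fibre + E.ofValue (S.form g.base (S.act g.degree h.base))⟩

instance : One (TwistedHeisenberg S E) := ⟨⟨0, 0⟩⟩

instance : Inv (TwistedHeisenberg S E) := ⟨fun g => ⟨-S.act (-g.degree) g.base, -g.fibre⟩⟩

@[simp] lemma base_one : (1 : TwistedHeisenberg S E).base = 0 := rfl

@[simp] lemma fibre_one : (1 : TwistedHeisenberg S E).fibre = 0 := rfl

lemma base_mul (g h : TwistedHeisenberg S E) :
    (g * h).base = g.base + S.act g.degree h.base := rfl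

lemma fibre_mul (g h : TwistedHeisenberg S E) :
    (g * h).fibre = g.fibre + h.fibre + E.ofValue (S.form g.base (S.act g.degree h.base)) := rfl

lemma base_inv (g : TwistedHeisenberg S E) : g⁻¹.base = -S.act (-g.degree) g.base := rfl

lemma fibre_inv (g : TwistedHeisenberg S E) : g⁻¹.fibre = -g.fibre := rfl

lemma degree_mk (a : A) (c : C) :
    (⟨a, c⟩ : TwistedHeisenberg S E).degree = S.degree a + E.degree c := rfl

@[simp] lemma degree_one : (1 : TwistedHeisenberg S E).degree = 0 := by simp [degree]

@[simp] lemma degree_mul (g h : TwistedHeisenberg S E) :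
    (g * h).degree = g.degree + h.degree := by
  simp only [degree, base_mul, fibre_mul, map_add, S.degree_act, E.degree_ofValue]
  abel

@[simp] lemma degree_inv (g : TwistedHeisenberg S E) : g⁻¹.degree = -g.degree := by
  simp only [degree, base_inv, fibre_inv, map_neg, S.degree_act, neg_add]

instance : Group (TwistedHeisenberg S E) := Group.ofLeftAxioms
  (fun g h k => by
    ext1
    · simp only [base_mul, degree_mul, map_add, S.act_act, add_assoc]
    · simp only [base_mul, fibre_mul, degree_mul, map_add, AddMonoidHom.add_apply, S.act_act]
      rw [← S.act_act g.degree h.degree, S.form_act]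
      abel)
  (fun g => by
    ext1
    · simp [base_mul]
    · simp [fibre_mul])
  (fun g => by
    ext1
    · simp [base_mul, base_inv]
    · simp [fibre_mul, base_inv, fibre_inv, S.form_self])

/-- The underlying set of a twisted Heisenberg group is the product of base and fibre. -/
def equivProd : TwistedHeisenberg S E ≃ A × C where
  toFun g := (g.base, g.fibre)
  invFun z := ⟨z.1, z.2⟩

lemma card_eq : Nat.card (TwistedHeisenberg S E) = Nat.card A * Nat.card C := by
  rw [Nat.card_congr (equivProd (S := S) (E := E)), Nat.card_prod]

instance [Finite A] [Finite C] : Finite (TwistedHeisenberg S E) :=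
  Finite.of_equiv _ (equivProd (S := S) (E := E)).symm

section Multiplication

lemma mul_of_degree_eq_zero {g : TwistedHeisenberg S E} (hg : g.degree = 0)
    (h : TwistedHeisenberg S E) :
    g * h = ⟨g.base + h.base, g.fibre + h.fibre + E.ofValue (S.form g.base h.base)⟩ := by
  ext1
  · rw [base_mul, hg, S.act_zero]
  · rw [fibre_mul, hg, S.act_zero]

lemma mul_mk_zero (g : TwistedHeisenberg S E) (c : C) :
    g * ⟨0, c⟩ = ⟨g.base, g.fibre + c⟩ := by
  ext1
  · simp [base_mul]
  · simp [fibre_mul]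

lemma mk_zero_mul (c : C) (g : TwistedHeisenberg S E) :
    ⟨0, c⟩ * g = ⟨S.act (E.degree c) g.base, c + g.fibre⟩ := by
  ext1
  · simp [base_mul, degree_mk]
  · simp [fibre_mul]

/-- The embedding of the fibre as the elements with trivial base coordinate. -/
def fibreHom (S : InvariantForm J A V) (E : ValueGroup J V C) :
    Multiplicative C →* TwistedHeisenberg S E where
  toFun c := ⟨0, c.toAdd⟩
  map_one' := rfl
  map_mul' c d := (mul_mk_zero ⟨0, c.toAdd⟩ d.toAdd).symm

/-- The subgroup of elements `(0, c)` with `c` in a subgroup of the fibre. -/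
def fibreSubgroup (S : InvariantForm J A V) (E : ValueGroup J V C) (K : AddSubgroup C) :
    Subgroup (TwistedHeisenberg S E) :=
  (AddSubgroup.toSubgroup K).map (fibreHom S E)

lemma mem_fibreSubgroup {K : AddSubgroup C} {g : TwistedHeisenberg S E} :
    g ∈ fibreSubgroup S E K ↔ g.base = 0 ∧ g.fibre ∈ K := by
  constructor
  · rintro ⟨c, hc, rfl⟩
    exact ⟨rfl, hc⟩
  · rintro ⟨h_base, h_fibre⟩
    exact ⟨Multiplicative.ofAdd g.fibre, h_fibre, TwistedHeisenberg.ext h_base.symm rfl⟩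

lemma commutator_fibreSubgroup_self (K : AddSubgroup C) :
    ⁅fibreSubgroup S E K, fibreSubgroup S E K⁆ = ⊥ := by
  rw [fibreSubgroup, ← Subgroup.map_commutator, Subgroup.commutator_self_eq_bot_iff.2 inferInstance,
    Subgroup.map_bot]

lemma mk_zero_pow (c : C) (n : ℕ) : (⟨0, c⟩ : TwistedHeisenberg S E) ^ n = ⟨0, n • c⟩ :=
  (map_pow (fibreHom S E) (Multiplicative.ofAdd c) n).symm

lemma pow_of_degree_eq_zero {g : TwistedHeisenberg S E} (hg : g.degree = 0) (n : ℕ) :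
    g ^ n = ⟨n • g.base, n • g.fibre⟩ := by
  induction n with
  | zero => simp only [pow_zero, zero_nsmul]; rfl
  | succ n ih =>
    rw [pow_succ', mul_of_degree_eq_zero hg, ih]
    simp only [succ_nsmul', map_nsmul, S.form_self, nsmul_zero, map_zero, add_zero]

lemma mk_ofValue_mul {a : A} (ha : S.degree a = 0) (b : A) (v w : V) :
    (⟨a, E.ofValue v⟩ : TwistedHeisenberg S E) * ⟨b, E.ofValue w⟩ =
      ⟨a + b, E.ofValue (v + w + S.form a b)⟩ := by
  rw [mul_of_degree_eq_zero (by rw [degree_mk, ha, E.degree_ofValue, add_zero]), map_add, map_add]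

lemma mk_ofValue_pow {a : A} (ha : S.degree a = 0) (v : V) (n : ℕ) :
    (⟨a, E.ofValue v⟩ : TwistedHeisenberg S E) ^ n = ⟨n • a, E.ofValue (n • v)⟩ := by
  rw [pow_of_degree_eq_zero (by rw [degree_mk, ha, E.degree_ofValue, add_zero]), map_nsmul]

lemma mk_cube {a : A} {c : C} {i : J} (hi : S.degree a + E.degree c = i) :
    (⟨a, c⟩ : TwistedHeisenberg S E) ^ 3 = ⟨a + S.act i a + S.act (i + i) a, 3 • c +
      E.ofValue (S.form a (S.act i a) + S.form (a + S.act i a) (S.act (i + i) a))⟩ := by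
  rw [pow_succ, pow_two]
  ext1
  · simp only [base_mul, degree_mul, degree_mk, hi]
  · simp only [base_mul, fibre_mul, degree_mul, degree_mk, hi, map_add]
    abel

end Multiplication

section Commutators

lemma commutatorElement_of_degree_eq_zero {g h : TwistedHeisenberg S E} (hg : g.degree = 0)
    (hh : h.degree = 0) : ⁅g, h⁆ = ⟨0, E.ofValue (2 • S.form g.base h.base)⟩ := by
  rw [commutatorElement_def, mul_assoc, ← mul_inv_rev, mul_inv_eq_iff_eq_mul,
    mul_of_degree_eq_zero hg, mul_of_degree_eq_zero hh, mk_zero_mul, E.degree_ofValue, S.act_zero]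
  ext1
  · exact add_comm _ _
  · simp only [S.form_swap g.base h.base, two_nsmul, map_add, map_neg]
    abel

lemma commutatorElement_mk_zero_mk (c : C) (b : A) (d : C) {a : A}
    (ha : S.act (E.degree c) b - b = a) :
    ⁅(⟨0, c⟩ : TwistedHeisenberg S E), (⟨b, d⟩ : TwistedHeisenberg S E)⁆ =
      ⟨a, -E.ofValue (S.form a b)⟩ := by
  have h_degree : (⟨a, -E.ofValue (S.form a b)⟩ : TwistedHeisenberg S E).degree = 0 := by
    simp [degree_mk, ← ha, S.degree_act, E.degree_ofValue]
  rw [commutatorElement_def, mul_assoc, ← mul_inv_rev, mul_inv_eq_iff_eq_mul, mul_mk_zero,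
    mk_zero_mul, mul_of_degree_eq_zero h_degree, ← ha]
  ext1
  · exact (sub_add_cancel _ _).symm
  · simp only
    abel

lemma comm'_eq_of {a a' b : A} {c c' : C} {v : V} {j j' : J} (hc : E.degree c = j)
    (hc' : E.degree c' = j')
    (hb : a + S.act (S.degree a + j) a' =
      a' + S.act (S.degree a' + j') a + S.act (S.degree a' + j' + (S.degree a + j)) b)
    (hv : S.form a (S.act (S.degree a + j) a') = S.form a' (S.act (S.degree a' + j') a) + v +
      S.form (a' + S.act (S.degree a' + j') a) (S.act (S.degree a' + j' + (S.degree a + j)) b)) :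
    comm' (⟨a, c⟩ : TwistedHeisenberg S E) ⟨a', c'⟩ = ⟨b, E.ofValue v⟩ := by
  have key : (⟨a, c⟩ : TwistedHeisenberg S E) * ⟨a', c'⟩ =
      ⟨a', c'⟩ * ⟨a, c⟩ * ⟨b, E.ofValue v⟩ := by
    ext1
    · simp only [base_mul, degree_mul, degree_mk, hc, hc', hb]
    · simp only [base_mul, fibre_mul, degree_mul, degree_mk, hc, hc', hv, map_add]
      abel
  rw [comm', mul_assoc, key]
  group

end Commutators

section Homomorphisms

/-- The automorphism `(a, c) ↦ (θ a, -c)` attached to an automorphism `θ` of the base that inverts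
the action and negates both the form and the degree. -/
def negEquiv (θ : A ≃+ A) (h_act : ∀ j a, θ (S.act j a) = S.act (-j) (θ a))
    (h_form : ∀ a b, S.form (θ a) (θ b) = -S.form a b)
    (h_degree : ∀ a, S.degree (θ a) = -S.degree a) :
    TwistedHeisenberg S E ≃* TwistedHeisenberg S E where
  toFun g := ⟨θ g.base, -g.fibre⟩
  invFun g := ⟨θ.symm g.base, -g.fibre⟩
  left_inv g := by simp
  right_inv g := by simp
  map_mul' g h := by
    have hg : (⟨θ g.base, -g.fibre⟩ : TwistedHeisenberg S E).degree = -g.degree := by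
      simp only [degree, map_neg, h_degree, neg_add]
    ext1
    · simp only [base_mul, hg, map_add, h_act]
    · simp only [fibre_mul, hg, ← h_act, h_form, map_neg]
      abel

lemma negEquiv_apply {θ : A ≃+ A} {h_act : ∀ j a, θ (S.act j a) = S.act (-j) (θ a)}
    {h_form : ∀ a b, S.form (θ a) (θ b) = -S.form a b}
    {h_degree : ∀ a, S.degree (θ a) = -S.degree a} (g : TwistedHeisenberg S E) :
    negEquiv θ h_act h_form h_degree g = ⟨θ g.base, -g.fibre⟩ := rfl

/-- The homomorphism `(a, c) ↦ (a, f c)` attached to compatible maps `φ` of the values of the form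
and `f` of the fibres. -/
def map {W D : Type*} [AddCommGroup W] [AddCommGroup D] {F : ValueGroup J W D} (φ : V →+ W)
    (f : C →+ D) (h_ofValue : ∀ v, f (E.ofValue v) = F.ofValue (φ v))
    (h_degree : ∀ c, F.degree (f c) = E.degree c) :
    TwistedHeisenberg S E →* TwistedHeisenberg (S.mapForm φ) F where
  toFun g := ⟨g.base, f g.fibre⟩
  map_one' := by ext1 <;> simp
  map_mul' g h := by
    have hg : (⟨g.base, f g.fibre⟩ : TwistedHeisenberg (S.mapForm φ) F).degree = g.degree := by
      rw [degree, h_degree]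
      rfl
    ext1
    · simp only [base_mul, hg]
      rfl
    · simp only [fibre_mul, hg, map_add, h_ofValue]
      rfl

/-- The homomorphism `(a, c) ↦ (f c, deg a)` to an abelian group, for `f` killing the values of the
form. -/
def toAbelian {B : Type*} [AddCommGroup B] (f : C →+ B) (hf : ∀ v, f (E.ofValue v) = 0) :
    TwistedHeisenberg S E →* Multiplicative (B × J) where
  toFun g := Multiplicative.ofAdd (f g.fibre, S.degree g.base)
  map_one' := by simp
  map_mul' g h := by
    simp only [← ofAdd_add, base_mul, fibre_mul, map_add, hf, S.degree_act, add_zero,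
      Prod.mk_add_mk]

lemma mem_ker_toAbelian {B : Type*} [AddCommGroup B] {f : C →+ B}
    {hf : ∀ v, f (E.ofValue v) = 0} {g : TwistedHeisenberg S E} :
    g ∈ (toAbelian f hf).ker ↔ f g.fibre = 0 ∧ S.degree g.base = 0 := by
  rw [MonoidHom.mem_ker]
  exact Multiplicative.toAdd.injective.eq_iff.symm.trans Prod.mk_eq_zero

end Homomorphisms

/-- The image in the base of a subgroup containing the fibre is closed under addition because the
degree of an element can be adjusted by the fibre. -/
lemma eq_top_of_closure_eq_top {s : Set A} {H : Subgroup (TwistedHeisenberg S E)}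
    (h_surj : Function.Surjective E.degree) (h_fibre : ∀ c, ⟨0, c⟩ ∈ H)
    (h_base : ∀ a ∈ s, ∃ c, ⟨a, c⟩ ∈ H) (hs : AddSubgroup.closure s = ⊤) : H = ⊤ := by
  have change_fibre {a : A} {c : C} (h : ⟨a, c⟩ ∈ H) (d : C) : ⟨a, d⟩ ∈ H := by
    simpa only [mul_mk_zero, add_sub_cancel] using mul_mem h (h_fibre (d - c))
  have degree_zero {a : A} {c : C} (h : ⟨a, c⟩ ∈ H) :
      ∃ g ∈ H, g.base = a ∧ g.degree = 0 := by
    obtain ⟨d, hd⟩ := h_surj (-S.degree a)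
    exact ⟨⟨a, d⟩, change_fibre h d, rfl, by rw [degree_mk, hd, add_neg_cancel]⟩
  have mem_base (a : A) : ∃ c, ⟨a, c⟩ ∈ H := by
    have ha : a ∈ AddSubgroup.closure s := hs ▸ AddSubgroup.mem_top a
    induction ha using AddSubgroup.closure_induction with
    | mem a ha => exact h_base a ha
    | zero => exact ⟨0, h_fibre 0⟩
    | add _ _ _ _ ha hb =>
      obtain ⟨g, hg, rfl, hg0⟩ := degree_zero ha.choose_spec
      exact ⟨_, mul_of_degree_eq_zero hg0 _ ▸ mul_mem hg hb.choose_spec⟩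
    | neg _ _ ha =>
      obtain ⟨g, hg, rfl, hg0⟩ := degree_zero ha.choose_spec
      have h_inv : g⁻¹ = ⟨-g.base, -g.fibre⟩ := by
        ext1
        · rw [base_inv, hg0, neg_zero, S.act_zero]
        · rfl
      exact ⟨_, h_inv ▸ inv_mem hg⟩
  exact (Subgroup.eq_top_iff' H).2 fun g => change_fibre (mem_base g.base).choose_spec g.fibre

end TwistedHeisenberg

section ZModMulHom

variable {a b k : ℕ}

/-- Multiplication by `k` as a homomorphism `ZMod a →+ ZMod b`, well defined when `b ∣ k * a`. -/
def zmodMulHom (k : ℕ) (h : b ∣ k * a) : ZMod a →+ ZMod b :=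
  ZMod.lift a ⟨zmultiplesHom (ZMod b) (k : ZMod b), by
    rw [zmultiplesHom_apply, natCast_zsmul, nsmul_eq_mul, mul_comm, ← Nat.cast_mul]
    exact (ZMod.natCast_eq_zero_iff _ _).2 h⟩

lemma zmodMulHom_intCast (h : b ∣ k * a) (z : ℤ) : zmodMulHom k h (z : ZMod a) = (k * z : ℤ) := by
  simp [zmodMulHom, mul_comm]

lemma zmodMulHom_comp_mulLeft {l : ℕ} (h : b ∣ k * a) (h' : b ∣ k * l * a) :
    (zmodMulHom k h).comp (AddMonoidHom.mulLeft (l : ZMod a)) = zmodMulHom (k * l) h' := by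
  ext x
  obtain ⟨z, rfl⟩ := ZMod.intCast_surjective x
  have hl : (l : ZMod a) * z = ((l * z : ℤ) : ZMod a) := by push_cast; rfl
  rw [AddMonoidHom.comp_apply, AddMonoidHom.coe_mulLeft, hl, zmodMulHom_intCast,
    zmodMulHom_intCast]
  push_cast
  ring

lemma castHom_zmodMulHom {a' b' : ℕ} (h : b ∣ k * a) (h' : b' ∣ k * a') (ha : a' ∣ a)
    (hb : b' ∣ b) (x : ZMod a) :
    ZMod.castHom hb (ZMod b') (zmodMulHom k h x) =
      zmodMulHom k h' (ZMod.castHom ha (ZMod a') x) := by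
  obtain ⟨z, rfl⟩ := ZMod.intCast_surjective x
  simp only [zmodMulHom_intCast, map_intCast]

lemma range_zmodMulHom {c : ℕ} (h : b ∣ k * a) (hc : c ∣ b) (hk : k.gcd b = c) :
    (zmodMulHom k h).range = (ZMod.castHom hc (ZMod c) : ZMod b →+ ZMod c).ker := by
  ext x
  rw [AddMonoidHom.mem_ker, AddMonoidHom.mem_range]
  constructor
  · rintro ⟨t, rfl⟩
    obtain ⟨z, rfl⟩ := ZMod.intCast_surjective t
    rw [zmodMulHom_intCast, AddMonoidHom.coe_coe, map_intCast, ZMod.intCast_zmod_eq_zero_iff_dvd]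
    exact Dvd.dvd.mul_right (Int.natCast_dvd_natCast.2 (hk ▸ Nat.gcd_dvd_left k b)) z
  · intro hx
    obtain ⟨z, rfl⟩ := ZMod.intCast_surjective x
    rw [AddMonoidHom.coe_coe, map_intCast, ZMod.intCast_zmod_eq_zero_iff_dvd] at hx
    obtain ⟨s, rfl⟩ := hx
    refine ⟨((k.gcdA b * s : ℤ) : ZMod a), ?_⟩
    rw [zmodMulHom_intCast, ← hk, Nat.gcd_eq_gcd_ab]
    push_cast
    rw [ZMod.natCast_self]
    ring

lemma gcd_mul_prime_pow {p k l n : ℕ} (hp : p.Prime) (hn : ¬ p ∣ n) (h : k ≤ l) :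
    (n * p ^ k).gcd (p ^ l) = p ^ k := by
  rw [← Nat.sub_add_cancel h, pow_add, Nat.gcd_mul_right,
    ((hp.coprime_iff_not_dvd.2 hn).pow_left _).symm.gcd_eq_one, one_mul]

/-- The cyclic group `ZMod b` as a `ValueGroup` receiving `ZMod a` by multiplication by `k`. -/
def cyclicValueGroup {p : ℕ} (hp : p ∣ b) (hk : p ∣ k) (h : b ∣ k * a) :
    ValueGroup (ZMod p) (ZMod a) (ZMod b) where
  ofValue := zmodMulHom k h
  degree := (ZMod.castHom hp (ZMod p) : ZMod b →+ ZMod p)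
  degree_ofValue v := by
    obtain ⟨z, rfl⟩ := ZMod.intCast_surjective v
    rw [zmodMulHom_intCast, AddMonoidHom.coe_coe, map_intCast, ZMod.intCast_zmod_eq_zero_iff_dvd]
    exact Dvd.dvd.mul_right (Int.natCast_dvd_natCast.2 hk) z

lemma surjective_degree_cyclicValueGroup {p : ℕ} (hp : p ∣ b) (hk : p ∣ k) (h : b ∣ k * a) :
    Function.Surjective (cyclicValueGroup hp hk h).degree :=
  ZMod.castHom_surjective hp

end ZModMulHom

/-- The additive group of `ℤ[N] / (27, 9 N)`, where `N` is a root of the polynomial `N² + 3 N - 6`,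
which is Eisenstein at `3`. The pair `(a, b)` stands for `a + b N`. -/
abbrev EisensteinQuotient : Type := ZMod 27 × ZMod 9

namespace EisensteinQuotient

open TwistedHeisenberg

lemma closure_one_N : AddSubgroup.closure {((1, 0) : EisensteinQuotient), (0, 1)} = ⊤ := by
  refine (AddSubgroup.eq_top_iff' _).2 fun a => ?_
  have ha : a = a.1.val • ((1, 0) : EisensteinQuotient) + a.2.val • (0, 1) := by
    ext1 <;> simp
  rw [ha]
  exact add_mem (nsmul_mem (AddSubgroup.subset_closure (by simp)) _)
    (nsmul_mem (AddSubgroup.subset_closure (by simp)) _)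

lemma hom_ext {B : Type*} [AddGroup B] {f g : EisensteinQuotient →+ B}
    (h_one : f (1, 0) = g (1, 0)) (h_N : f (0, 1) = g (0, 1)) : f = g :=
  AddMonoidHom.eq_of_eqOn_dense closure_one_N (by rintro _ (rfl | rfl) <;> assumption)

/-- Reduction modulo `9` of the coordinate of `1`. -/
def redNine : ZMod 27 →+ ZMod 9 := (ZMod.castHom (by norm_num) (ZMod 9) : ZMod 27 →+* ZMod 9)

/-- Multiplication by `1 + N`, a unit of multiplicative order `3`. -/
def mulOneAddN : AddMonoid.End EisensteinQuotient :=
  AddMonoidHom.prod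
    (AddMonoidHom.fst _ _ + (zmodMulHom 6 (by norm_num)).comp (AddMonoidHom.snd _ _))
    (redNine.comp (AddMonoidHom.fst _ _) - 2 • AddMonoidHom.snd _ _)

lemma mulOneAddN_apply (a : EisensteinQuotient) :
    mulOneAddN a = (a.1 + zmodMulHom 6 (by norm_num) a.2, redNine a.1 - 2 * a.2) := by
  ext1
  · rfl
  · exact congrArg (redNine a.1 - ·) (two_nsmul a.2 |>.trans (two_mul a.2).symm)

lemma mulOneAddN_pow_three : mulOneAddN ^ 3 = 1 := hom_ext (by decide) (by decide)

/-- The reduction modulo the maximal ideal, which contains `N` and `3`. -/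
def residue : EisensteinQuotient →+ ZMod 3 :=
  (ZMod.castHom (by norm_num : 3 ∣ 27) (ZMod 3) : ZMod 27 →+ ZMod 3).comp (AddMonoidHom.fst _ _)

lemma residue_mulOneAddN (a : EisensteinQuotient) : residue (mulOneAddN a) = residue a :=
  DFunLike.congr_fun (hom_ext (f := residue.comp mulOneAddN) (by decide) (by decide)) a

/-- The determinant form on the coordinates modulo `9`. -/
def detForm : EisensteinQuotient →+ EisensteinQuotient →+ ZMod 9 :=
  (AddMonoidHom.mul.comp (AddMonoidHom.snd _ _)).compl₂ (redNine.comp (AddMonoidHom.fst _ _)) -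
    (AddMonoidHom.mul.comp (redNine.comp (AddMonoidHom.fst _ _))).compl₂ (AddMonoidHom.snd _ _)

lemma detForm_apply (a b : EisensteinQuotient) :
    detForm a b = a.2 * redNine b.1 - redNine a.1 * b.2 := rfl

lemma detForm_mulOneAddN (a b : EisensteinQuotient) :
    detForm (mulOneAddN a) (mulOneAddN b) = detForm a b := by
  have h : (detForm.compl₂ mulOneAddN).comp mulOneAddN = detForm :=
    hom_ext (hom_ext (by decide) (by decide)) (hom_ext (by decide) (by decide))
  exact DFunLike.congr_fun (DFunLike.congr_fun h a) b

/-- The `InvariantForm` in which `1 : ZMod 3` acts as multiplication by `1 + N`. -/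
def invariantForm : InvariantForm (ZMod 3) EisensteinQuotient (ZMod 9) :=
  InvariantForm.ofGenerator mulOneAddN mulOneAddN_pow_three detForm residue
    (fun a => by rw [detForm_apply, mul_comm, sub_self]) detForm_mulOneAddN residue_mulOneAddN

lemma act_one : invariantForm.act 1 = mulOneAddN := pow_one _

/-- The involution `a + b N ↦ -a + b (N - 6)`, which inverts multiplication by `1 + N`. Modulo `9`
it is the negative of the conjugation `N ↦ -3 - N`. -/
def negConj : EisensteinQuotient ≃+ EisensteinQuotient :=
  let θ := AddMonoidHom.prod
    (-AddMonoidHom.fst _ _ - (zmodMulHom 6 (by norm_num)).comp (AddMonoidHom.snd _ _))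
    (AddMonoidHom.snd _ _)
  θ.toAddEquiv θ (hom_ext (by decide) (by decide)) (hom_ext (by decide) (by decide))

lemma negConj_act (j : ZMod 3) (a : EisensteinQuotient) :
    negConj (invariantForm.act j a) = invariantForm.act (-j) (negConj a) :=
  DFunLike.congr_fun (invariantForm.semiconj_act_of_one (θ := negConj.toAddMonoidHom)
    (hom_ext (by decide) (by decide)) j) a

lemma form_negConj (a b : EisensteinQuotient) :
    invariantForm.form (negConj a) (negConj b) = -invariantForm.form a b := by
  have h : (detForm.compl₂ negConj.toAddMonoidHom).comp negConj.toAddMonoidHom = -detForm :=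
    hom_ext (hom_ext (by decide) (by decide)) (hom_ext (by decide) (by decide))
  exact DFunLike.congr_fun (DFunLike.congr_fun h a) b

lemma degree_negConj (a : EisensteinQuotient) :
    invariantForm.degree (negConj a) = -invariantForm.degree a :=
  DFunLike.congr_fun
    (hom_ext (f := residue.comp negConj.toAddMonoidHom) (g := -residue) (by decide) (by decide)) a

lemma exists_act_one_sub_eq {a : EisensteinQuotient} (ha : invariantForm.degree a = 0) :
    ∃ b, invariantForm.act 1 b - b = a := by
  have h_range := range_zmodMulHom (by norm_num : 27 ∣ 6 * 9) (by norm_num : 3 ∣ 27) (by norm_num)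
  obtain ⟨s, hs⟩ : a.1 ∈ (zmodMulHom 6 (by norm_num : 27 ∣ 6 * 9)).range := by
    rw [h_range]
    exact ha
  obtain ⟨t, ht⟩ : ∃ t, redNine t = a.2 + 3 * s :=
    ZMod.castHom_surjective (by norm_num : 9 ∣ 27) _
  refine ⟨(t, s), Prod.ext ?_ ?_⟩
  · rw [act_one, mulOneAddN_apply, Prod.fst_sub, hs, add_sub_cancel_left]
  · rw [act_one, mulOneAddN_apply, Prod.snd_sub, ht]
    ring

lemma exists_form_eq_three_mul {a b : EisensteinQuotient} (ha : invariantForm.degree a = 0)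
    (hb : invariantForm.degree b = 0) : ∃ t, invariantForm.form a b = 3 * t := by
  have three_dvd : ∀ z : ZMod 27, ZMod.castHom (by norm_num : 3 ∣ 27) (ZMod 3) z = 0 →
      3 ∣ redNine z := by decide
  exact dvd_sub (Dvd.dvd.mul_left (three_dvd _ hb) _) (Dvd.dvd.mul_right (three_dvd _ ha) _)

section DerivedSeries

variable {C : Type*} [AddCommGroup C] {E : ValueGroup (ZMod 3) (ZMod 9) C}

lemma mk_zero_ofValue_mem_commutator (h_surj : Function.Surjective E.degree) (v : ZMod 9) :
    (⟨0, E.ofValue v⟩ : TwistedHeisenberg invariantForm E) ∈ commutator _ := by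
  obtain ⟨u, hu⟩ := h_surj 1
  have h_form : ∀ v, 2 • invariantForm.form (1, 0) (0, 4 * v) = v := by decide
  have h : (⟨0, E.ofValue v⟩ : TwistedHeisenberg invariantForm E) =
      ⁅(⟨(1, 0), -u⟩ : TwistedHeisenberg invariantForm E), ⟨(0, 4 * v), 0⟩⁆ := by
    rw [commutatorElement_of_degree_eq_zero, h_form]
    · rw [degree_mk, map_neg, hu]
      rfl
    · rw [degree_mk, map_zero]
      rfl
  exact h ▸ Subgroup.commutator_mem_commutator (Subgroup.mem_top _) (Subgroup.mem_top _)

lemma mem_commutator_iff (h_surj : Function.Surjective E.degree)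
    {g : TwistedHeisenberg invariantForm E} :
    g ∈ commutator _ ↔ invariantForm.degree g.base = 0 ∧ g.fibre ∈ E.ofValue.range := by
  have mk_eq_zero (c : C) : QuotientAddGroup.mk' E.ofValue.range c = 0 ↔ c ∈ E.ofValue.range :=
    QuotientAddGroup.eq_zero_iff c
  constructor
  · intro hg
    have h := mem_ker_toAbelian.1 (Abelianization.commutator_subset_ker
      (toAbelian (QuotientAddGroup.mk' E.ofValue.range) fun v => (mk_eq_zero _).2 ⟨v, rfl⟩) hg)
    exact ⟨h.2, (mk_eq_zero _).1 h.1⟩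
  · rintro ⟨h_degree, h_fibre⟩
    obtain ⟨u, hu⟩ := h_surj 1
    obtain ⟨b, hb⟩ := exists_act_one_sub_eq h_degree
    have hg : g = ⁅(⟨0, u⟩ : TwistedHeisenberg invariantForm E), ⟨b, 0⟩⁆ *
        ⟨0, g.fibre + E.ofValue (invariantForm.form g.base b)⟩ := by
      rw [commutatorElement_mk_zero_mk u b 0 (hu ▸ hb), mul_mk_zero, add_comm g.fibre,
        neg_add_cancel_left]
    obtain ⟨v, hv⟩ := add_mem h_fibre ⟨invariantForm.form g.base b, rfl⟩
    rw [hg, ← hv]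
    exact mul_mem (Subgroup.commutator_mem_commutator (Subgroup.mem_top _) (Subgroup.mem_top _))
      (mk_zero_ofValue_mem_commutator h_surj v)

lemma degree_eq_zero_of_mem_commutator (h_surj : Function.Surjective E.degree)
    {g : TwistedHeisenberg invariantForm E} (hg : g ∈ commutator _) : g.degree = 0 := by
  obtain ⟨h_degree, v, hv⟩ := (mem_commutator_iff h_surj).1 hg
  rw [TwistedHeisenberg.degree, h_degree, ← hv, E.degree_ofValue, add_zero]

lemma derivedSeries_two (h_surj : Function.Surjective E.degree) :
    derivedSeries (TwistedHeisenberg invariantForm E) 2 =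
      fibreSubgroup invariantForm E (E.ofValue.comp (AddMonoidHom.mulLeft 3)).range := by
  rw [derivedSeries_succ, derivedSeries_one]
  apply le_antisymm
  · refine Subgroup.commutator_le.2 fun g hg h hh => ?_
    obtain ⟨t, ht⟩ := exists_form_eq_three_mul ((mem_commutator_iff h_surj).1 hg).1
      ((mem_commutator_iff h_surj).1 hh).1
    rw [commutatorElement_of_degree_eq_zero (degree_eq_zero_of_mem_commutator h_surj hg)
      (degree_eq_zero_of_mem_commutator h_surj hh), ht]
    exact mem_fibreSubgroup.2 ⟨rfl, 2 • t, congrArg E.ofValue (mul_smul_comm 2 3 t)⟩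
  · intro g hg
    obtain ⟨h_base, t, ht⟩ := mem_fibreSubgroup.1 hg
    have h_form : ∀ t, 2 • invariantForm.form (3, 0) (0, 4 * t) = 3 * t := by decide
    have h_degree : invariantForm.degree (3, 0) = 0 := by decide
    have h : ⁅(⟨(3, 0), 0⟩ : TwistedHeisenberg invariantForm E), ⟨(0, 4 * t), 0⟩⁆ = g := by
      rw [commutatorElement_of_degree_eq_zero, h_form]
      · exact TwistedHeisenberg.ext h_base.symm ht
      · rw [degree_mk, map_zero, h_degree, add_zero]
      · rw [degree_mk, map_zero]
        rfl
    exact h ▸ Subgroup.commutator_mem_commutator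
      ((mem_commutator_iff h_surj).2 ⟨h_degree, zero_mem _⟩)
      ((mem_commutator_iff h_surj).2 ⟨rfl, zero_mem _⟩)

lemma derivedSeries_three (h_surj : Function.Surjective E.degree) :
    derivedSeries (TwistedHeisenberg invariantForm E) 3 = ⊥ := by
  rw [derivedSeries_succ, derivedSeries_two h_surj, commutator_fibreSubgroup_self]

lemma nonempty_abelianization_mulEquiv {B : Type*} [AddCommGroup B]
    (h_surj : Function.Surjective E.degree) {f : C →+ B} (hf : Function.Surjective f)
    (h_ker : E.ofValue.range = f.ker) :
    Nonempty (Abelianization (TwistedHeisenberg invariantForm E) ≃*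
      Multiplicative (B × ZMod 3)) := by
  let q := toAbelian (S := invariantForm) f fun v =>
    f.mem_ker.1 (h_ker ▸ AddMonoidHom.mem_range.2 ⟨v, rfl⟩)
  have hq : Function.Surjective q := by
    rintro ⟨b, j⟩
    obtain ⟨c, rfl⟩ := hf b
    obtain ⟨r, rfl⟩ := ZMod.castHom_surjective (by norm_num : 3 ∣ 27) j
    exact ⟨⟨(r, 0), c⟩, rfl⟩
  have hq_ker : commutator _ = q.ker := by
    ext g
    rw [mem_commutator_iff h_surj, mem_ker_toAbelian, h_ker, and_comm, AddMonoidHom.mem_ker]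
  exact ⟨(QuotientGroup.quotientMulEquivOfEq hq_ker).trans
    (QuotientGroup.quotientKerEquivOfSurjective q hq)⟩

lemma isSigmaGroup (h_surj : Function.Surjective E.degree) :
    IsSigmaGroup (TwistedHeisenberg invariantForm E) := by
  refine ⟨negEquiv negConj negConj_act form_negConj degree_negConj, fun g => ?_⟩
  rw [eq_inv_iff_mul_eq_one, ← map_mul, ← MonoidHom.mem_ker, Abelianization.ker_of,
    mem_commutator_iff h_surj, negEquiv_apply]
  constructor
  · rw [base_mul, map_add, degree_negConj, invariantForm.degree_act, neg_add_cancel]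
  · rw [fibre_mul, neg_add_cancel, zero_add]
    exact ⟨_, rfl⟩

end DerivedSeries

/-- `invariantForm` with the values of the form reduced modulo `3`. -/
abbrev reducedForm : InvariantForm (ZMod 3) EisensteinQuotient (ZMod 3) :=
  invariantForm.mapForm (ZMod.castHom (by norm_num : 3 ∣ 9) (ZMod 3) : ZMod 9 →+ ZMod 3)

lemma closure_one_act_one :
    AddSubgroup.closure {((1, 0) : EisensteinQuotient), reducedForm.act 1 (1, 0)} = ⊤ := by
  have h_N : ((0, 1) : EisensteinQuotient) = reducedForm.act 1 (1, 0) - (1, 0) := by decide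
  rw [eq_top_iff, ← closure_one_N, AddSubgroup.closure_le]
  rintro _ (rfl | rfl)
  · exact AddSubgroup.subset_closure (by simp)
  · exact h_N ▸ sub_mem (AddSubgroup.subset_closure (by simp))
      (AddSubgroup.subset_closure (by simp))

section Relations

variable {C : Type*} [AddCommGroup C] {E : ValueGroup (ZMod 3) (ZMod 3) C} {u v : C}

lemma sgen_two (hu : E.degree u = 1) (hv : E.degree v = 0) :
    sgen (⟨0, u⟩ : TwistedHeisenberg reducedForm E) ⟨(1, 0), v⟩ 2 = ⟨(21, 2), E.ofValue (-1)⟩ :=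
  comm'_eq_of hv hu (by decide) (by decide)

lemma sgen_three (hu : E.degree u = 1) (hv : E.degree v = 0) :
    sgen (⟨0, u⟩ : TwistedHeisenberg reducedForm E) ⟨(1, 0), v⟩ 3 = ⟨(6, 6), E.ofValue 0⟩ := by
  rw [sgen, sgen_two hu hv]
  exact comm'_eq_of (E.degree_ofValue _) hu (by decide) (by decide)

lemma sgen_four (hu : E.degree u = 1) (hv : E.degree v = 0) :
    sgen (⟨0, u⟩ : TwistedHeisenberg reducedForm E) ⟨(1, 0), v⟩ 4 = ⟨(0, 3), E.ofValue 0⟩ := by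
  rw [sgen, sgen_three hu hv]
  exact comm'_eq_of (E.degree_ofValue _) hu (by decide) (by decide)

lemma sgen_five (hu : E.degree u = 1) (hv : E.degree v = 0) :
    sgen (⟨0, u⟩ : TwistedHeisenberg reducedForm E) ⟨(1, 0), v⟩ 5 = ⟨(9, 0), E.ofValue 0⟩ := by
  rw [sgen, sgen_four hu hv]
  exact comm'_eq_of (E.degree_ofValue _) hu (by decide) (by decide)

lemma pow_three_eq_sgen_five (hu : E.degree u = 1) (hv : E.degree v = 0)
    (h_three : 3 • v = E.ofValue 1) :
    (⟨(1, 0), v⟩ : TwistedHeisenberg reducedForm E) ^ 3 = sgen ⟨0, u⟩ ⟨(1, 0), v⟩ 5 := by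
  rw [sgen_five hu hv, mk_cube (i := 1) (by rw [hv]; rfl), h_three, ← map_add]
  exact congrArg₂ TwistedHeisenberg.mk (by decide) (congrArg E.ofValue (by decide))

lemma sgen_two_pow_three (hu : E.degree u = 1) (hv : E.degree v = 0) :
    sgen (⟨0, u⟩ : TwistedHeisenberg reducedForm E) ⟨(1, 0), v⟩ 2 ^ 3 =
      sgen ⟨0, u⟩ ⟨(1, 0), v⟩ 4 ^ 2 * sgen ⟨0, u⟩ ⟨(1, 0), v⟩ 5 := by
  rw [sgen_two hu hv, sgen_four hu hv, sgen_five hu hv, mk_ofValue_pow rfl,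
    mk_ofValue_pow rfl, mk_ofValue_mul rfl]
  exact congrArg₂ TwistedHeisenberg.mk (by decide) (congrArg E.ofValue (by decide))

lemma sgen_three_pow_three (hu : E.degree u = 1) (hv : E.degree v = 0) :
    sgen (⟨0, u⟩ : TwistedHeisenberg reducedForm E) ⟨(1, 0), v⟩ 3 ^ 3 =
      sgen ⟨0, u⟩ ⟨(1, 0), v⟩ 5 ^ 2 := by
  rw [sgen_three hu hv, sgen_five hu hv, mk_ofValue_pow rfl,
    mk_ofValue_pow rfl]
  exact congrArg₂ TwistedHeisenberg.mk (by decide) (congrArg E.ofValue (by decide))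

lemma tgenD_three (hu : E.degree u = 1) (hv : E.degree v = 0) :
    tgenD (⟨0, u⟩ : TwistedHeisenberg reducedForm E) ⟨(1, 0), v⟩ 3 =
      sgen ⟨0, u⟩ ⟨(1, 0), v⟩ 3 * ⟨0, E.ofValue 1⟩ := by
  rw [tgenD, sgen_two hu hv, sgen_three hu hv, mk_ofValue_mul rfl]
  exact comm'_eq_of (E.degree_ofValue _) hv (by decide) (by decide)

lemma tgenD_four (hu : E.degree u = 1) (hv : E.degree v = 0) :
    tgenD (⟨0, u⟩ : TwistedHeisenberg reducedForm E) ⟨(1, 0), v⟩ 4 =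
      sgen ⟨0, u⟩ ⟨(1, 0), v⟩ 4 := by
  rw [tgenD, sgen_three hu hv, sgen_four hu hv]
  exact comm'_eq_of (E.degree_ofValue _) hv (by decide) (by decide)

lemma tgenD_five (hu : E.degree u = 1) (hv : E.degree v = 0) :
    tgenD (⟨0, u⟩ : TwistedHeisenberg reducedForm E) ⟨(1, 0), v⟩ 5 =
      sgen ⟨0, u⟩ ⟨(1, 0), v⟩ 5 := by
  rw [tgenD, sgen_four hu hv, sgen_five hu hv]
  exact comm'_eq_of (E.degree_ofValue _) hv (by decide) (by decide)

lemma closure_eq_top (hu : E.degree u = 1) (h_gen : ∀ c, ∃ n : ℕ, n • u = c) :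
    Subgroup.closure {⟨0, u⟩, (⟨(1, 0), v⟩ : TwistedHeisenberg reducedForm E)} = ⊤ := by
  have hx : (⟨0, u⟩ : TwistedHeisenberg reducedForm E) ∈
      Subgroup.closure {⟨0, u⟩, ⟨(1, 0), v⟩} := Subgroup.subset_closure (by simp)
  have hy : (⟨(1, 0), v⟩ : TwistedHeisenberg reducedForm E) ∈
      Subgroup.closure {⟨0, u⟩, ⟨(1, 0), v⟩} := Subgroup.subset_closure (by simp)
  have hxy : (⟨reducedForm.act 1 (1, 0), u + v⟩ : TwistedHeisenberg reducedForm E) ∈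
      Subgroup.closure {⟨0, u⟩, ⟨(1, 0), v⟩} := by
    rw [← hu]
    exact mk_zero_mul u (⟨(1, 0), v⟩ : TwistedHeisenberg reducedForm E) ▸ mul_mem hx hy
  refine eq_top_of_closure_eq_top
    (s := ({(1, 0), reducedForm.act 1 (1, 0)} : Set EisensteinQuotient)) ?_ ?_ ?_
    closure_one_act_one
  · intro j
    exact ⟨j.val • u, by rw [map_nsmul, hu, nsmul_one, ZMod.natCast_zmod_val]⟩
  · intro c
    obtain ⟨n, rfl⟩ := h_gen c
    rw [← mk_zero_pow]
    exact pow_mem hx n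
  · rintro _ (rfl | rfl)
    exacts [⟨v, hy⟩, ⟨u + v, hxy⟩]

end Relations

end EisensteinQuotient

section Groups

variable {e m : ℕ}

lemma pow_add_two_dvd_mul_nine (e m : ℕ) : 3 ^ (e + 2) ∣ m * 3 ^ e * 9 := ⟨m, by ring⟩

lemma pow_succ_dvd_mul_three (e m : ℕ) : 3 ^ (e + 1) ∣ m * 3 ^ e * 3 := ⟨m, by ring⟩

/-- The fibre `ZMod (3 ^ (e + 2))` of the group `G`, on which the form takes values in the subgroup
of order `9`, embedded by multiplication by `m 3 ^ e`. -/
abbrev sigmaValueGroup (e m : ℕ) [NeZero e] :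
    ValueGroup (ZMod 3) (ZMod 9) (ZMod (3 ^ (e + 2))) :=
  cyclicValueGroup (k := m * 3 ^ e) (dvd_pow_self 3 (by lia))
    (Dvd.dvd.mul_left (dvd_pow_self 3 (NeZero.ne e)) m) (pow_add_two_dvd_mul_nine e m)

/-- The fibre `ZMod (3 ^ (e + 1))` of the quotient `G / G''`. -/
abbrev metabelianValueGroup (e m : ℕ) [NeZero e] :
    ValueGroup (ZMod 3) (ZMod 3) (ZMod (3 ^ (e + 1))) :=
  cyclicValueGroup (k := m * 3 ^ e) (dvd_pow_self 3 (by lia))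
    (Dvd.dvd.mul_left (dvd_pow_self 3 (NeZero.ne e)) m) (pow_succ_dvd_mul_three e m)

/-- The σ-group `G` of order `3 ^ (7 + e)`; the paper's index `i` is `m + 1`. -/
abbrev SigmaGroup (e m : ℕ) [NeZero e] : Type :=
  TwistedHeisenberg EisensteinQuotient.invariantForm (sigmaValueGroup e m)

/-- The metabelianization `G / G''` of order `3 ^ (6 + e)`. -/
abbrev MetabelianGroup (e m : ℕ) [NeZero e] : Type :=
  TwistedHeisenberg EisensteinQuotient.reducedForm (metabelianValueGroup e m)

open EisensteinQuotient TwistedHeisenberg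

variable [NeZero e]

lemma surjective_degree_sigmaValueGroup : Function.Surjective (sigmaValueGroup e m).degree :=
  surjective_degree_cyclicValueGroup _ _ _

lemma card_sigmaGroup : Nat.card (SigmaGroup e m) = 3 ^ (7 + e) := by
  rw [card_eq, Nat.card_prod, Nat.card_zmod, Nat.card_zmod, Nat.card_zmod]
  ring

lemma card_metabelianGroup : Nat.card (MetabelianGroup e m) = 3 ^ (6 + e) := by
  rw [card_eq, Nat.card_prod, Nat.card_zmod, Nat.card_zmod, Nat.card_zmod]
  ring

/-- The reduction modulo `3 ^ (e + 1)` of the fibre. -/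
abbrev reduceFibre (e : ℕ) : ZMod (3 ^ (e + 2)) →+ ZMod (3 ^ (e + 1)) :=
  (ZMod.castHom (pow_dvd_pow 3 (by lia : e + 1 ≤ e + 2)) (ZMod (3 ^ (e + 1))) :
    ZMod (3 ^ (e + 2)) →+ ZMod (3 ^ (e + 1)))

/-- The homomorphism `G → G / G''`, reducing the fibre and the values of the form. -/
def toMetabelian (e m : ℕ) [NeZero e] : SigmaGroup e m →* MetabelianGroup e m :=
  TwistedHeisenberg.map _ (reduceFibre e)
    (castHom_zmodMulHom (pow_add_two_dvd_mul_nine e m) (pow_succ_dvd_mul_three e m) (by norm_num)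
      (pow_dvd_pow 3 (by lia)))
    (fun c => RingHom.congr_fun (ZMod.castHom_comp (dvd_pow_self 3 (by lia : e + 1 ≠ 0))
      (pow_dvd_pow 3 (by lia : e + 1 ≤ e + 2))) c)

lemma toMetabelian_surjective : Function.Surjective (toMetabelian e m) := by
  rintro ⟨a, c⟩
  obtain ⟨d, rfl⟩ : ∃ d, reduceFibre e d = c :=
    ZMod.castHom_surjective (pow_dvd_pow 3 (by lia : e + 1 ≤ e + 2)) c
  exact ⟨⟨a, d⟩, rfl⟩

lemma mem_ker_toMetabelian {g : SigmaGroup e m} :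
    g ∈ (toMetabelian e m).ker ↔ g.base = 0 ∧ reduceFibre e g.fibre = 0 :=
  MonoidHom.mem_ker.trans TwistedHeisenberg.ext_iff

lemma ker_toMetabelian (hm : ¬ 3 ∣ m) :
    (toMetabelian e m).ker = derivedSeries (SigmaGroup e m) 2 := by
  have h_dvd : 3 ^ (e + 2) ∣ m * 3 ^ e * 3 * 9 :=
    (pow_add_two_dvd_mul_nine e m).trans ⟨3, by ring⟩
  have h_range : ((sigmaValueGroup e m).ofValue.comp (AddMonoidHom.mulLeft 3)).range =
      (reduceFibre e).ker :=
    (congrArg _ (zmodMulHom_comp_mulLeft (l := 3) (pow_add_two_dvd_mul_nine e m) h_dvd)).trans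
      (range_zmodMulHom h_dvd (pow_dvd_pow 3 (by lia)) (by
        rw [mul_assoc, ← pow_succ]
        exact gcd_mul_prime_pow Nat.prime_three hm (by lia)))
  ext g
  rw [derivedSeries_two surjective_degree_sigmaValueGroup, h_range, mem_ker_toMetabelian,
    mem_fibreSubgroup, AddMonoidHom.mem_ker]

lemma derivedSeries_two_ne_bot (hm : ¬ 3 ∣ m) : derivedSeries (SigmaGroup e m) 2 ≠ ⊥ := by
  intro h
  rw [← ker_toMetabelian hm, MonoidHom.ker_eq_bot_iff] at h
  have h_card := Nat.card_congr (Equiv.ofBijective _ ⟨h, toMetabelian_surjective⟩)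
  rw [card_sigmaGroup, card_metabelianGroup] at h_card
  have := Nat.pow_right_injective (by norm_num : 2 ≤ 3) h_card
  lia

lemma isMetabelian_metabelianGroup (hm : ¬ 3 ∣ m) : IsMetabelian (MetabelianGroup e m) := by
  rw [IsMetabelian, ← map_derivedSeries_eq toMetabelian_surjective, Subgroup.map_eq_bot_iff,
    ker_toMetabelian hm]

lemma nonempty_abelianization_sigmaGroup (hm : ¬ 3 ∣ m) :
    Nonempty (Abelianization (SigmaGroup e m) ≃* Multiplicative (ZMod (3 ^ e) × ZMod 3)) :=
  have h_dvd : 3 ^ e ∣ 3 ^ (e + 2) := pow_dvd_pow 3 (by lia)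
  nonempty_abelianization_mulEquiv surjective_degree_sigmaValueGroup
    (ZMod.castHom_surjective h_dvd)
    (range_zmodMulHom (pow_add_two_dvd_mul_nine e m) h_dvd
      (gcd_mul_prime_pow Nat.prime_three hm (by lia)))

/-- The generator `x` of `G / G''`. -/
abbrev genX (e m : ℕ) [NeZero e] : MetabelianGroup e m := ⟨0, 1⟩

/-- The generator `y` of `G / G''`. Its fibre coordinate is a third of the value `1` of the form. -/
abbrev genY (e m : ℕ) [NeZero e] : MetabelianGroup e m := ⟨(1, 0), (m * 3 ^ (e - 1) : ℕ)⟩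

lemma metabelianValueGroup_degree_one : (metabelianValueGroup e m).degree 1 = 1 :=
  map_one (ZMod.castHom (dvd_pow_self 3 (by lia : e + 1 ≠ 0)) (ZMod 3))

lemma metabelianValueGroup_degree_mul_pow_pred (he : 2 ≤ e) :
    (metabelianValueGroup e m).degree (m * 3 ^ (e - 1) : ℕ) = 0 :=
  (map_natCast (ZMod.castHom (dvd_pow_self 3 (by lia : e + 1 ≠ 0)) (ZMod 3)) _).trans
    ((ZMod.natCast_eq_zero_iff _ _).2 (Dvd.dvd.mul_left (dvd_pow_self 3 (by lia)) m))

lemma metabelianValueGroup_ofValue_one :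
    (metabelianValueGroup e m).ofValue 1 = (m * 3 ^ e : ℕ) := by
  have h := zmodMulHom_intCast (pow_succ_dvd_mul_three e m) 1
  rw [mul_one, Int.cast_one, Int.cast_natCast] at h
  exact h

lemma three_nsmul_mul_pow_pred :
    3 • ((m * 3 ^ (e - 1) : ℕ) : ZMod (3 ^ (e + 1))) = (metabelianValueGroup e m).ofValue 1 := by
  rw [metabelianValueGroup_ofValue_one, nsmul_eq_mul, ← Nat.cast_mul, mul_left_comm,
    mul_pow_sub_one (NeZero.ne e)]

lemma genX_pow_pow_three : (genX e m ^ 3 ^ e) ^ 3 = 1 := by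
  rw [← pow_mul, mk_zero_pow, nsmul_one, ← pow_succ, ZMod.natCast_self]
  rfl

lemma genX_pow_pow : (genX e m ^ 3 ^ e) ^ m = ⟨0, (metabelianValueGroup e m).ofValue 1⟩ := by
  rw [← pow_mul, mk_zero_pow, nsmul_one, mul_comm, metabelianValueGroup_ofValue_one]

end Groups

open EisensteinQuotient in
theorem stmt8_general (e i : ℕ) (he : 2 ≤ e) (hi : ¬ 3 ∣ i - 1) :
    ∃ (G : Type) (_ : Group G) (_ : Finite G),
      Nat.card G = 3 ^ (7 + e) ∧
      Nonempty (Abelianization G ≃* Multiplicative (ZMod (3 ^ e) × ZMod 3)) ∧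
      (∃ σ : G ≃* G, ∀ g : G, Abelianization.of (σ g) = (Abelianization.of g)⁻¹) ∧
      derivedSeries G 2 ≠ ⊥ ∧
      derivedSeries G 3 = ⊥ ∧
      ∃ (M : Type) (_ : Group M) (_ : Finite M) (x y : M),
        Subgroup.closure {x, y} = ⊤ ∧
        Nat.card M = 3 ^ (6 + e) ∧
        IsMetabelian M ∧
        (x ^ 3 ^ e) ^ 3 = 1 ∧
          y ^ 3 = sgen x y 5 ∧
          sgen x y 2 ^ 3 = sgen x y 4 ^ 2 * sgen x y 5 ∧
          sgen x y 3 ^ 3 = sgen x y 5 ^ 2 ∧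
          tgenD x y 3 = sgen x y 3 * (x ^ 3 ^ e) ^ (i - 1) ∧
          tgenD x y 4 = sgen x y 4 ∧
          tgenD x y 5 = sgen x y 5 ∧
        ∃ φ : G →* M, Function.Surjective φ ∧ φ.ker = derivedSeries G 2 := by
  have : NeZero e := ⟨by lia⟩
  have hx := metabelianValueGroup_degree_one (e := e) (m := i - 1)
  have hy := metabelianValueGroup_degree_mul_pow_pred (m := i - 1) he
  refine ⟨SigmaGroup e (i - 1), inferInstance, inferInstance, card_sigmaGroup,
    nonempty_abelianization_sigmaGroup hi, isSigmaGroup surjective_degree_sigmaValueGroup,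
    derivedSeries_two_ne_bot hi, derivedSeries_three surjective_degree_sigmaValueGroup,
    MetabelianGroup e (i - 1), inferInstance, inferInstance, genX e (i - 1), genY e (i - 1),
    closure_eq_top hx fun c => ⟨c.val, by simp⟩, card_metabelianGroup,
    isMetabelian_metabelianGroup hi, genX_pow_pow_three,
    pow_three_eq_sgen_five hx hy three_nsmul_mul_pow_pred, sgen_two_pow_three hx hy,
    sgen_three_pow_three hx hy, by rw [genX_pow_pow]; exact tgenD_three hx hy, tgenD_four hx hy,
    tgenD_five hx hy, toMetabelian e (i - 1), toMetabelian_surjective, ker_toMetabelian hi⟩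

theorem stmt8 (e i : ℕ) (he : 5 ≤ e) (hi : i = 2 ∨ i = 3) :
    ∃ (G : Type) (_ : Group G) (_ : Finite G),
      Nat.card G = 3 ^ (7 + e) ∧
      Nonempty (Abelianization G ≃* Multiplicative (ZMod (3 ^ e) × ZMod 3)) ∧
      (∃ σ : G ≃* G, ∀ g : G, Abelianization.of (σ g) = (Abelianization.of g)⁻¹) ∧
      derivedSeries G 2 ≠ ⊥ ∧
      derivedSeries G 3 = ⊥ ∧
      ∃ (M : Type) (_ : Group M) (_ : Finite M) (x y : M),
        Subgroup.closure {x, y} = ⊤ ∧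
        Nat.card M = 3 ^ (6 + e) ∧
        IsMetabelian M ∧
        (x ^ 3 ^ e) ^ 3 = 1 ∧
          y ^ 3 = sgen x y 5 ∧
          sgen x y 2 ^ 3 = sgen x y 4 ^ 2 * sgen x y 5 ∧
          sgen x y 3 ^ 3 = sgen x y 5 ^ 2 ∧
          tgenD x y 3 = sgen x y 3 * (x ^ 3 ^ e) ^ (i - 1) ∧
          tgenD x y 4 = sgen x y 4 ∧
          tgenD x y 5 = sgen x y 5 ∧
        ∃ φ : G →* M, Function.Surjective φ ∧ φ.ker = derivedSeries G 2 :=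
  stmt8_general e i (by lia) (by lia)
end

section
/- For every integer e ≥ 5 and each i ∈ {2,3}, there exists a finite metabelian σ-group M of order 3^{6+e}, generated by two elements x and y satisfying w^3 = 1, y^3 = s₅^2, s₂^3 = s₄^2 s₅, s₃^3 = s₅^2, t₃ = s₃ s₅ w^{i-1}, t₄ = s₄, and t₅ = s₅, whose abelianization is isomorphic to (ZMod (3^e)) × (ZMod 3); moreover there exists a finite group G of order 3^{7+e} with the same abelianization, admitting a σ-automorphism, with second derived subgroup nontrivial and third derived subgroup trivial (derived length exactly 3), such that G/G'' is isomorphic to M. -/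
/-!
The commutator subgroup of `G` is taken to be the Heisenberg-type group `N` of order `3 ^ 6` over
`ZMod 9`, generated by `s₂`, `s₃` and a central element `W` with `[s₃, s₂] = W ^ 3`; then
`G'' = ⟨W ^ 3⟩` is central of order `3`. The group `G` is built from `N` by two cyclic extensions,
adjoining first `y` and then `x` with `x ^ 3 ^ e = W ^ d`; its abelianization is read off the
exponents of `x` and `y`, and the automorphism inverting `x` and `y` comes from the universal
property of the extensions. In `M = G / G''` the element `W` has order dividing `3`, so for `d`
prime to `3` the congruence `d ^ 2 ≡ 1` modulo `3` gives `W = (x ^ 3 ^ e) ^ d`, which is the factor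
occurring in `t₃`.
-/

section Commutators

variable {G H : Type*} [Group G] [Group H]

theorem map_comm' (f : G →* H) (a b : G) : f (comm' a b) = comm' (f a) (f b) := by
  simp only [comm', map_mul, map_inv]

theorem comm'_mem_commutator (a b : G) : comm' a b ∈ commutator G := by
  have h := Subgroup.commutator_mem_commutator (Subgroup.mem_top a⁻¹) (Subgroup.mem_top b⁻¹)
  rwa [commutatorElement_def, inv_inv, inv_inv] at h

theorem comm'_mem {D : Subgroup G} {a b : G} (ha : a ∈ D) (hb : b ∈ D) : comm' a b ∈ D :=
  D.mul_mem (D.mul_mem (D.mul_mem (D.inv_mem ha) (D.inv_mem hb)) ha) hb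

theorem derivedSeries_quotient_derivedSeries (n : ℕ) :
    derivedSeries (G ⧸ derivedSeries G n) n = ⊥ := by
  rw [← map_derivedSeries_eq (QuotientGroup.mk'_surjective (derivedSeries G n)),
    QuotientGroup.map_mk'_self]

theorem normalClosure_singleton_of_mem_center {g : G} (hg : g ∈ Subgroup.center G) :
    Subgroup.normalClosure {g} = Subgroup.zpowers g := by
  have hle : Subgroup.zpowers g ≤ Subgroup.center G := (Subgroup.zpowers_le).2 hg
  have : (Subgroup.zpowers g).Normal := by
    rw [← Subgroup.commutator_top_left_le_iff,
      Subgroup.commutator_top_left_eq_bot_iff_le_center.2 hle]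
    exact bot_le
  exact le_antisymm
    (Subgroup.normalClosure_le_normal (Set.singleton_subset_iff.2 (Subgroup.mem_zpowers g)))
    (Subgroup.zpowers_le.2 (Subgroup.subset_normalClosure rfl))

theorem conj_inv_eq_one_of_mem_center {g : G} (hg : g ∈ Subgroup.center G) :
    MulAut.conj g⁻¹ = 1 :=
  MulEquiv.ext fun n ↦ by
    rw [MulAut.conj_apply, inv_inv, ← Subgroup.mem_center_iff.1 (inv_mem hg) n,
      inv_mul_cancel_right, MulAut.one_apply]

end Commutators

section Abelianization

variable {G A : Type*} [Group G] [CommGroup A]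

/-- A surjection onto a commutative group with kernel `[G, G]` identifies its target with the
abelianization. -/
noncomputable def abelianizationEquivOfKerEq (f : G →* A) (hf : Function.Surjective f)
    (hker : f.ker = commutator G) : Abelianization G ≃* A :=
  (QuotientGroup.quotientMulEquivOfEq hker.symm).trans
    (QuotientGroup.quotientKerEquivOfSurjective f hf)

/-- Factoring out a normal subgroup contained in `[G, G]` does not change the abelianization. -/
def abelianizationQuotientEquiv (K : Subgroup G) [K.Normal] (hK : K ≤ commutator G) :
    Abelianization (G ⧸ K) ≃* Abelianization G :=
  MonoidHom.toMulEquiv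
    (Abelianization.lift (QuotientGroup.lift K Abelianization.of
      (hK.trans_eq (Abelianization.ker_of G).symm)))
    (Abelianization.map (QuotientGroup.mk' K))
    (by ext; rfl) (by ext; rfl)

theorem IsSigmaGroup.quotient (hG : IsSigmaGroup G) (K : Subgroup G) [K.Characteristic] :
    IsSigmaGroup (G ⧸ K) := by
  obtain ⟨σ, hσ⟩ := hG
  have hK : K.map (σ : G →* G) = K := Subgroup.characteristic_iff_map_eq.1 inferInstance σ
  refine ⟨QuotientGroup.congr K K σ hK, fun q ↦ ?_⟩
  obtain ⟨g, rfl⟩ := QuotientGroup.mk'_surjective K q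
  have h := congrArg (Abelianization.map (QuotientGroup.mk' K)) (hσ g)
  rwa [map_inv, Abelianization.map_of, Abelianization.map_of] at h

end Abelianization

/-- An endomorphism whose cube is the identity, as an automorphism. -/
def mulAutOfCube {G : Type*} [Group G] (f : G →* G) (hf : ∀ g, f (f (f g)) = g) : MulAut G :=
  MonoidHom.toMulEquiv f (f.comp f) (MonoidHom.ext hf) (MonoidHom.ext hf)

theorem mulAutOfCube_pow_three {G : Type*} [Group G] (f : G →* G) (hf : ∀ g, f (f (f g)) = g) :
    mulAutOfCube f hf ^ 3 = 1 :=
  MulEquiv.ext hf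

/-- The semidirect product of `N` by an infinite cyclic group whose generator `t` satisfies
`t⁻¹ n t = β n`. As `SemidirectProduct` lets `t` act by `n ↦ t n t⁻¹`, the action is through
`β⁻¹`. -/
abbrev InfiniteCyclicExt {N : Type*} [Group N] (β : MulAut N) : Type _ :=
  N ⋊[zpowersHom (MulAut N) β⁻¹] Multiplicative ℤ

/-- The element `a⁻¹ t ^ m`, killed in the cyclic extension in which `t ^ m = a`. -/
def relator {N : Type*} [Group N] (β : MulAut N) (a : N) (m : ℕ) : InfiniteCyclicExt β :=
  ⟨a⁻¹, .ofAdd m⟩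

/-- The cyclic extension `⟨N, t | t⁻¹ n t = β n, t ^ m = a⟩` of `N`. -/
def CyclicExt {N : Type*} [Group N] (β : MulAut N) (a : N) (m : ℕ) : Type _ :=
  InfiniteCyclicExt β ⧸ Subgroup.normalClosure {relator β a m}

namespace CyclicExt

variable {N : Type*} [Group N] (β : MulAut N) (a : N) (m : ℕ)

instance : Group (CyclicExt β a m) :=
  inferInstanceAs (Group (InfiniteCyclicExt β ⧸ Subgroup.normalClosure {relator β a m}))

/-- The projection of the infinite cyclic extension onto the cyclic extension. -/
def mk : InfiniteCyclicExt β →* CyclicExt β a m := QuotientGroup.mk' _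

theorem mk_eq_one_iff {g : InfiniteCyclicExt β} :
    mk β a m g = 1 ↔ g ∈ Subgroup.normalClosure {relator β a m} :=
  QuotientGroup.eq_one_iff g

/-- The canonical map from the base group to the cyclic extension. -/
def inc : N →* CyclicExt β a m := (mk β a m).comp SemidirectProduct.inl

/-- The adjoined generator `t` of the cyclic extension. -/
def gen : CyclicExt β a m := mk β a m (SemidirectProduct.inr (.ofAdd 1))

theorem gen_conj_inc (n : N) :
    (gen β a m)⁻¹ * inc β a m n * gen β a m = inc β a m (β n) := by
  have h := SemidirectProduct.inl_aut_inv (φ := zpowersHom (MulAut N) β⁻¹) (.ofAdd 1) n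
  simp only [map_inv, zpowersHom_apply, toAdd_ofAdd, zpow_one, inv_inv] at h
  simp only [inc, gen, MonoidHom.comp_apply, h, map_mul, map_inv]

theorem inc_mul_gen_zpow (n : N) (k : ℤ) :
    inc β a m n * gen β a m ^ k = mk β a m ⟨n, .ofAdd k⟩ := by
  rw [inc, gen, MonoidHom.comp_apply, ← map_zpow, ← map_mul, ← map_zpow, ← ofAdd_zsmul,
    SemidirectProduct.mk_eq_inl_mul_inr, smul_eq_mul, mul_one]

theorem exists_eq_inc_mul_gen_zpow (g : CyclicExt β a m) :
    ∃ (n : N) (k : ℤ), g = inc β a m n * gen β a m ^ k := by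
  obtain ⟨⟨n, k⟩, rfl⟩ := QuotientGroup.mk'_surjective _ g
  exact ⟨n, k.toAdd, (inc_mul_gen_zpow β a m n k.toAdd).symm⟩

theorem gen_pow : gen β a m ^ m = inc β a m a := by
  have h : (inc β a m a)⁻¹ * gen β a m ^ m = 1 := by
    rw [← map_inv, ← zpow_natCast, inc_mul_gen_zpow]
    exact (mk_eq_one_iff β a m).2 (Subgroup.subset_normalClosure rfl)
  exact (inv_mul_eq_one.1 h).symm

variable {β a m}

theorem inc_mul_gen (n : N) : inc β a m n * gen β a m = gen β a m * inc β a m (β n) := by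
  rw [← gen_conj_inc]
  group

theorem gen_mul_inc_pow_three (n : N) :
    (gen β a m * inc β a m n) ^ 3 = gen β a m ^ 3 * inc β a m (β (β n) * β n * n) := by
  have h (n : N) (g : CyclicExt β a m) :
      inc β a m n * (gen β a m * g) = gen β a m * (inc β a m (β n) * g) := by
    rw [← mul_assoc, inc_mul_gen, mul_assoc]
  simp only [pow_three, map_mul, mul_assoc, h]

theorem hom_ext {H : Type*} [Group H] {f g : CyclicExt β a m →* H}
    (hinc : f.comp (inc β a m) = g.comp (inc β a m)) (hgen : f (gen β a m) = g (gen β a m)) :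
    f = g :=
  QuotientGroup.monoidHom_ext _ (SemidirectProduct.hom_ext hinc (MonoidHom.ext_mint hgen))

theorem eq_top_of_inc_mem_of_gen_mem {D : Subgroup (CyclicExt β a m)}
    (hinc : ∀ n, inc β a m n ∈ D) (hgen : gen β a m ∈ D) : D = ⊤ := by
  refine (Subgroup.eq_top_iff' D).2 fun g ↦ ?_
  obtain ⟨n, k, rfl⟩ := exists_eq_inc_mul_gen_zpow β a m g
  exact D.mul_mem (hinc n) (D.zpow_mem hgen k)

section Lift

variable {H : Type*} [Group H] (f : N →* H) (h : H)

theorem zpow_conj_map (hconj : ∀ n, h⁻¹ * f n * h = f (β n)) (k : ℤ) (n : N) :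
    f ((β⁻¹ ^ k) n) = h ^ k * f n * (h ^ k)⁻¹ := by
  have hconj' (n : N) : f (β⁻¹ n) = h * f n * h⁻¹ := by
    rw [← MulAut.apply_inv_self N β n, ← hconj, MulAut.apply_inv_self]
    group
  induction k generalizing n with
  | zero => simp
  | succ k ih =>
    rw [zpow_add_one, zpow_add_one, MulAut.mul_apply, ih, hconj']
    group
  | pred k ih =>
    rw [zpow_sub_one, zpow_sub_one, inv_inv, MulAut.mul_apply, ih, ← hconj]
    group

/-- The homomorphism out of the infinite cyclic extension determined by images of `N` and `t`. -/
def preLift (hconj : ∀ n, h⁻¹ * f n * h = f (β n)) : InfiniteCyclicExt β →* H :=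
  SemidirectProduct.lift f (zpowersHom H h) fun k ↦
    MonoidHom.ext fun n ↦ zpow_conj_map f h hconj k.toAdd n

theorem preLift_inl (hconj : ∀ n, h⁻¹ * f n * h = f (β n)) (n : N) :
    preLift f h hconj (SemidirectProduct.inl n) = f n := by
  rw [preLift, SemidirectProduct.lift_inl]

theorem preLift_inr (hconj : ∀ n, h⁻¹ * f n * h = f (β n)) (k : ℤ) :
    preLift f h hconj (SemidirectProduct.inr (.ofAdd k)) = h ^ k := by
  rw [preLift, SemidirectProduct.lift_inr, zpowersHom_apply, toAdd_ofAdd]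

theorem preLift_relator (hconj : ∀ n, h⁻¹ * f n * h = f (β n)) (hpow : h ^ m = f a) :
    preLift f h hconj (relator β a m) = 1 := by
  rw [relator, SemidirectProduct.mk_eq_inl_mul_inr, map_mul, preLift_inl,
    preLift_inr, zpow_natCast, hpow, map_inv, inv_mul_cancel]

/-- The universal property of the cyclic extension: an image of `N` and an image `h` of the
generator satisfying the defining relations determine a homomorphism. -/
def lift (hconj : ∀ n, h⁻¹ * f n * h = f (β n)) (hpow : h ^ m = f a) : CyclicExt β a m →* H :=
  QuotientGroup.lift _ (preLift f h hconj)
    (Subgroup.normalClosure_le_normal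
      (Set.singleton_subset_iff.2 (preLift_relator f h hconj hpow)))

variable (hconj : ∀ n, h⁻¹ * f n * h = f (β n)) (hpow : h ^ m = f a)

@[simp]
theorem lift_inc (n : N) : lift f h hconj hpow (inc β a m n) = f n :=
  preLift_inl f h hconj n

@[simp]
theorem lift_gen : lift f h hconj hpow (gen β a m) = h :=
  (preLift_inr f h hconj 1).trans (zpow_one h)

end Lift

section Degree

variable (β a m)

/-- The exponent of the generator, well defined modulo `m`. -/
def degree : CyclicExt β a m →* Multiplicative (ZMod m) :=
  lift 1 (.ofAdd 1) (by simp) (by rw [← ofAdd_nsmul]; simp)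

variable {β a m}

@[simp]
theorem degree_inc (n : N) : degree β a m (inc β a m n) = 1 := lift_inc ..

@[simp]
theorem degree_gen : degree β a m (gen β a m) = .ofAdd 1 := lift_gen ..

theorem degree_inc_mul_gen_zpow (n : N) (k : ℤ) :
    degree β a m (inc β a m n * gen β a m ^ k) = .ofAdd (k : ZMod m) := by
  rw [map_mul, map_zpow, degree_inc, degree_gen, one_mul, ← ofAdd_zsmul, zsmul_one]

theorem degree_surjective : Function.Surjective (degree β a m) := fun k ↦ by
  obtain ⟨l, hl⟩ := ZMod.intCast_surjective k.toAdd
  exact ⟨inc β a m 1 * gen β a m ^ l, by rw [degree_inc_mul_gen_zpow, hl, ofAdd_toAdd]⟩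

theorem ker_degree : (degree β a m).ker = (inc β a m).range := by
  refine le_antisymm (fun g hg ↦ ?_) ?_
  · obtain ⟨n, k, rfl⟩ := exists_eq_inc_mul_gen_zpow β a m g
    rw [MonoidHom.mem_ker, degree_inc_mul_gen_zpow, ofAdd_eq_one,
      ZMod.intCast_zmod_eq_zero_iff_dvd] at hg
    obtain ⟨q, rfl⟩ := hg
    exact ⟨n * a ^ q, by rw [map_mul, map_zpow, ← gen_pow, zpow_mul, zpow_natCast]⟩
  · rintro _ ⟨n, rfl⟩
    exact degree_inc n

variable {A : Type*} [CommGroup A] (F : N →* A) (hβ : ∀ n, F (β n) = F n) (ha : F a = 1)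

/-- The homomorphism recording the degree together with a `β`-invariant homomorphism `F` on the
base, extended by `F t = 1`. -/
def degreeProd : CyclicExt β a m →* Multiplicative (ZMod m) × A :=
  (degree β a m).prod (lift F 1 (by simp [hβ]) (by simp [ha]))

theorem degreeProd_surjective (hF : Function.Surjective F) :
    Function.Surjective (degreeProd (m := m) F hβ ha) := fun ⟨k, b⟩ ↦ by
  obtain ⟨n, rfl⟩ := hF b
  obtain ⟨l, hl⟩ := ZMod.intCast_surjective k.toAdd
  refine ⟨inc β a m n * gen β a m ^ l, Prod.ext ?_ ?_⟩
  · exact (degree_inc_mul_gen_zpow n l).trans (by rw [hl, ofAdd_toAdd])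
  · simp [degreeProd]

theorem ker_degreeProd : (degreeProd (m := m) F hβ ha).ker = F.ker.map (inc β a m) := by
  rw [degreeProd, MonoidHom.ker_prod, ker_degree]
  ext g
  simp only [Subgroup.mem_inf, MonoidHom.mem_range, MonoidHom.mem_ker, Subgroup.mem_map]
  constructor
  · rintro ⟨⟨n, rfl⟩, hn⟩
    exact ⟨n, by rwa [lift_inc] at hn, rfl⟩
  · rintro ⟨n, hn, rfl⟩
    exact ⟨⟨n, rfl⟩, by rwa [lift_inc]⟩

end Degree

section Card

variable (hfix : β a = a) (hpow : β ^ m = MulAut.conj a⁻¹)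
include hfix hpow

theorem relator_mem_center :
    relator β a m ∈ Subgroup.center (InfiniteCyclicExt β) := by
  have hfix_zpow (k : ℤ) : (β⁻¹ ^ k) a⁻¹ = a⁻¹ := by
    have hβ : β⁻¹ ∈ MulAction.stabilizer (MulAut N) a⁻¹ :=
      Subgroup.inv_mem _ (by rw [MulAction.mem_stabilizer_iff, MulAut.smul_def, map_inv, hfix])
    exact Subgroup.zpow_mem _ hβ k
  have hpow_inv : β⁻¹ ^ m = MulAut.conj a := by rw [inv_pow, hpow, map_inv, inv_inv]
  refine Subgroup.mem_center_iff.2 fun ⟨n, k⟩ ↦ SemidirectProduct.ext ?_ (mul_comm _ _)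
  simp only [relator, SemidirectProduct.mul_left, zpowersHom_apply, toAdd_ofAdd, zpow_natCast,
    hpow_inv, hfix_zpow, MulAut.conj_apply]
  group

theorem inc_injective [NeZero m] : Function.Injective (inc β a m) := by
  refine (injective_iff_map_eq_one _).2 fun n hn ↦ ?_
  replace hn := (mk_eq_one_iff β a m).1 hn
  -- The nontrivial powers of the central relator have nonzero degree, so they miss `N`.
  rw [normalClosure_singleton_of_mem_center (relator_mem_center hfix hpow)] at hn
  obtain ⟨k, hk : relator β a m ^ k = SemidirectProduct.inl n⟩ := hn
  have hkm : k * m = 0 := by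
    have h := congrArg SemidirectProduct.rightHom hk
    rw [map_zpow, SemidirectProduct.rightHom_inl] at h
    exact congrArg Multiplicative.toAdd h
  obtain rfl : k = 0 := (mul_eq_zero.1 hkm).resolve_right (mod_cast NeZero.ne m)
  exact SemidirectProduct.inl_injective (hk.symm.trans (zpow_zero _))

theorem card_eq [NeZero m] : Nat.card (CyclicExt β a m) = Nat.card N * m := by
  rw [← Subgroup.card_mul_index (degree β a m).ker, Subgroup.index_ker,
    MonoidHom.range_eq_top_of_surjective (degree β a m) degree_surjective, Subgroup.card_top,
    ker_degree, ← Nat.card_congr (MonoidHom.ofInjective (inc_injective hfix hpow)).toEquiv,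
    Nat.card_congr Multiplicative.toAdd, Nat.card_zmod]

end Card

section Reflect

variable (f : N →* N) (hf : ∀ n, β (f (β n)) = f n) (ha : f a = a⁻¹)

/-- The extension of an endomorphism of the base to the cyclic extension that inverts the adjoined
generator. -/
def reflect : CyclicExt β a m →* CyclicExt β a m :=
  lift ((inc β a m).comp f) (gen β a m)⁻¹
    (fun n ↦ by
      simp only [MonoidHom.comp_apply]
      rw [← hf n, ← gen_conj_inc]
      group)
    (by rw [inv_pow, gen_pow, MonoidHom.comp_apply, ha, map_inv])

@[simp]
theorem reflect_inc (n : N) : reflect (m := m) f hf ha (inc β a m n) = inc β a m (f n) :=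
  lift_inc ..

@[simp]
theorem reflect_gen : reflect f hf ha (gen β a m) = (gen β a m)⁻¹ :=
  lift_gen ..

theorem reflect_involutive (hinv : Function.Involutive f) :
    Function.Involutive (reflect (m := m) f hf ha) :=
  DFunLike.congr_fun (f := (reflect f hf ha).comp (reflect f hf ha)) (g := MonoidHom.id _) <|
    hom_ext (MonoidHom.ext fun n ↦ by simp [hinv n]) (by simp)

theorem map_reflect_eq_inv {A : Type*} [CommGroup A] (F : CyclicExt β a m →* A)
    (hF : ∀ n, F (inc β a m (f n)) = (F (inc β a m n))⁻¹) (g : CyclicExt β a m) :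
    F (reflect f hf ha g) = (F g)⁻¹ :=
  DFunLike.congr_fun (f := F.comp (reflect f hf ha)) (g := F⁻¹)
    (hom_ext (MonoidHom.ext fun n ↦ by simp [hF]) (by simp)) g

end Reflect

end CyclicExt

/-- The Heisenberg group over `R` with commutator form scaled by `k`: triples multiplied by the
2-cocycle `(u, v) ↦ k * u.b * v.a`. -/
@[ext]
structure Heis (R : Type*) (k : R) where
  a : R
  b : R
  c : R

namespace Heis

open scoped commutatorElement

variable {R : Type*} [CommRing R] {k : R}

instance : Mul (Heis R k) := ⟨fun u v ↦ ⟨u.a + v.a, u.b + v.b, u.c + v.c + k * u.b * v.a⟩⟩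
instance : One (Heis R k) := ⟨⟨0, 0, 0⟩⟩
instance : Inv (Heis R k) := ⟨fun u ↦ ⟨-u.a, -u.b, -u.c + k * u.b * u.a⟩⟩

theorem mul_def (u v : Heis R k) :
    u * v = ⟨u.a + v.a, u.b + v.b, u.c + v.c + k * u.b * v.a⟩ := rfl

theorem one_def : (1 : Heis R k) = ⟨0, 0, 0⟩ := rfl

theorem inv_def (u : Heis R k) : u⁻¹ = ⟨-u.a, -u.b, -u.c + k * u.b * u.a⟩ := rfl

instance : Group (Heis R k) := Group.ofLeftAxioms
  (fun u v w ↦ by ext <;> simp only [mul_def] <;> ring)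
  (fun u ↦ by simp [mul_def, one_def])
  (fun u ↦ by ext <;> simp [mul_def, one_def, inv_def])

/-- The coordinate bijection with `R × R × R`. -/
def equivProd {R : Type*} (k : R) : Heis R k ≃ R × R × R where
  toFun u := (u.a, u.b, u.c)
  invFun p := ⟨p.1, p.2.1, p.2.2⟩

instance {R : Type*} {k : R} [Finite R] : Finite (Heis R k) :=
  Finite.of_equiv _ (equivProd k).symm

instance {R : Type*} {k : R} [DecidableEq R] : DecidableEq (Heis R k) :=
  (equivProd k).decidableEq

theorem card_eq {R : Type*} (k : R) : Nat.card (Heis R k) = Nat.card R ^ 3 := by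
  rw [Nat.card_congr (equivProd k), Nat.card_prod, Nat.card_prod]
  ring

theorem mk_zero_zero_mem_center (r : R) : (⟨0, 0, r⟩ : Heis R k) ∈ Subgroup.center (Heis R k) :=
  Subgroup.mem_center_iff.2 fun u ↦ by simp [mul_def, add_comm]

theorem commutatorElement_eq (u v : Heis R k) :
    ⁅u, v⁆ = ⟨0, 0, k * (u.b * v.a - v.b * u.a)⟩ := by
  ext <;> simp only [commutatorElement_def, mul_def, inv_def] <;> ring

/-- The central homomorphism whose range is the commutator subgroup. -/
def centralHom (k : R) : Multiplicative R →* Heis R k where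
  toFun r := ⟨0, 0, k * r.toAdd⟩
  map_one' := by simp [one_def]
  map_mul' r s := by simp [mul_def, mul_add]

theorem commutator_eq_range_centralHom : commutator (Heis R k) = (centralHom k).range := by
  refine le_antisymm (Subgroup.commutator_le.2 fun u _ v _ ↦ ?_) ?_
  · exact ⟨.ofAdd _, (commutatorElement_eq u v).symm⟩
  · rintro _ ⟨r, rfl⟩
    have h : centralHom k r = ⁅(⟨0, 1, 0⟩ : Heis R k), ⟨r.toAdd, 0, 0⟩⁆ := by
      simp [commutatorElement_eq, centralHom]
    rw [h]
    exact Subgroup.commutator_mem_commutator (Subgroup.mem_top _) (Subgroup.mem_top _)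

theorem mem_commutator_iff {u : Heis R k} :
    u ∈ commutator (Heis R k) ↔ u.a = 0 ∧ u.b = 0 ∧ k ∣ u.c := by
  rw [commutator_eq_range_centralHom]
  constructor
  · rintro ⟨r, rfl⟩
    exact ⟨rfl, rfl, Dvd.intro _ rfl⟩
  · rintro ⟨ha, hb, r, hr⟩
    exact ⟨.ofAdd r, Heis.ext ha.symm hb.symm hr.symm⟩

theorem commutator_le_center : commutator (Heis R k) ≤ Subgroup.center (Heis R k) := by
  rw [commutator_eq_range_centralHom]
  rintro _ ⟨r, rfl⟩
  exact mk_zero_zero_mem_center _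

theorem pow_mk_zero_zero (r : R) (n : ℕ) : (⟨r, 0, 0⟩ : Heis R k) ^ n = ⟨n * r, 0, 0⟩ := by
  induction n with
  | zero => simp [one_def]
  | succ n ih => rw [pow_succ, ih]; simp [mul_def, add_mul]

theorem pow_zero_mk_mk (r s : R) (n : ℕ) : (⟨0, r, s⟩ : Heis R k) ^ n = ⟨0, n * r, n * s⟩ := by
  induction n with
  | zero => simp [one_def]
  | succ n ih => rw [pow_succ, ih]; simp [mul_def, add_mul]

theorem commutator_zmod_eq_zpowers {n : ℕ} [NeZero n] (k : ZMod n) :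
    commutator (Heis (ZMod n) k) = Subgroup.zpowers ⟨0, 0, k⟩ := by
  refine le_antisymm (fun u hu ↦ ?_) (Subgroup.zpowers_le.2 (mem_commutator_iff.2 (by simp)))
  obtain ⟨ha, hb, r, hr⟩ := mem_commutator_iff.1 hu
  refine ⟨r.val, ?_⟩
  change _ ^ (r.val : ℤ) = u
  rw [zpow_natCast, pow_zero_mk_mk, ZMod.natCast_zmod_val, mul_zero, mul_comm r]
  exact Heis.ext ha.symm hb.symm hr.symm

theorem eq_top_of_generators_mem {n : ℕ} [NeZero n] {k : ZMod n}
    {D : Subgroup (Heis (ZMod n) k)} (ha : ⟨1, 0, 0⟩ ∈ D) (hb : ⟨0, 1, 0⟩ ∈ D)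
    (hc : ⟨0, 0, 1⟩ ∈ D) : D = ⊤ := by
  refine (Subgroup.eq_top_iff' D).2 fun u ↦ ?_
  have hu : u = ⟨1, 0, 0⟩ ^ u.a.val * ⟨0, 1, 0⟩ ^ u.b.val * ⟨0, 0, 1⟩ ^ u.c.val := by
    simp only [pow_mk_zero_zero, pow_zero_mk_mk, ZMod.natCast_zmod_val]
    ext <;> simp [mul_def]
  rw [hu]
  exact D.mul_mem (D.mul_mem (D.pow_mem ha _) (D.pow_mem hb _)) (D.pow_mem hc _)

end Heis

/-- The commutator subgroup of the cover group of type D.5; the triple `⟨a, b, c⟩` stands for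
`s₂ ^ a * s₃ ^ b * W ^ c`, where `W` is the central element with `[s₃, s₂] = W ^ 3`. -/
abbrev DerivedD5 : Type := Heis (ZMod 9) 3

namespace DerivedD5

/-- The commutator `[y, x]`. -/
def s₂ : DerivedD5 := ⟨1, 0, 0⟩

/-- The commutator `[s₂, x]`. -/
def s₃ : DerivedD5 := ⟨0, 1, 0⟩

/-- The commutator `[s₃, x]`, whose coordinates solve `s₂ ^ 3 * W ^ 3 = s₄ ^ 2 * s₅`. -/
def s₄ : DerivedD5 := ⟨6, 6, 6⟩

/-- The commutator `[s₄, x]`, whose coordinates solve `s₃ ^ 3 = s₅ ^ 2`. -/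
def s₅ : DerivedD5 := ⟨0, 6, 0⟩

/-- The central element that becomes a power of `x ^ 3 ^ e`. -/
def W : DerivedD5 := ⟨0, 0, 1⟩

/-- The value of `y ^ 3`. -/
def yCube : DerivedD5 := ⟨0, 3, 0⟩

/-- Conjugation by `x`, determined by `[s₂, x] = s₃`, `[s₃, x] = s₄` and `[W, x] = 1`. -/
def autX : MulAut DerivedD5 :=
  mulAutOfCube
    (MonoidHom.mk' (fun u ↦ ⟨u.a + 6 * u.b, u.a + 7 * u.b, u.c + 3 * u.a - 3 * u.a ^ 2 + 6 * u.b⟩)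
      fun u v ↦ by
        simp only [Heis.mul_def, Heis.mk.injEq]
        refine ⟨?_, ?_, ?_⟩ <;> grind)
    fun u ↦ by
      simp only [MonoidHom.mk'_apply, Heis.ext_iff]
      refine ⟨?_, ?_, ?_⟩ <;> grind

/-- Conjugation by `y`, determined by `[s₂, y] = s₃ * s₅ * W`, `[s₃, y] = s₄ * W ^ 3` and
`[W, y] = 1`. -/
def autY : MulAut DerivedD5 :=
  mulAutOfCube
    (MonoidHom.mk' (fun u ↦ ⟨u.a + 6 * u.b, 7 * u.a + 7 * u.b, u.c + 4 * u.a - 3 * u.a ^ 2⟩)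
      fun u v ↦ by
        simp only [Heis.mul_def, Heis.mk.injEq]
        refine ⟨?_, ?_, ?_⟩ <;> grind)
    fun u ↦ by
      simp only [MonoidHom.mk'_apply, Heis.ext_iff]
      refine ⟨?_, ?_, ?_⟩ <;> grind

/-- The restriction of the automorphism inverting `x` and `y`. -/
def sigma : DerivedD5 →* DerivedD5 :=
  MonoidHom.mk' (fun u ↦ ⟨u.a, 4 * u.a - u.b, -u.a - 3 * u.a ^ 2 - u.c⟩) fun u v ↦ by
    simp only [Heis.mul_def, Heis.mk.injEq]
    refine ⟨?_, ?_, ?_⟩ <;> grind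

theorem autX_apply (u : DerivedD5) :
    autX u = ⟨u.a + 6 * u.b, u.a + 7 * u.b, u.c + 3 * u.a - 3 * u.a ^ 2 + 6 * u.b⟩ := rfl

theorem autY_apply (u : DerivedD5) :
    autY u = ⟨u.a + 6 * u.b, 7 * u.a + 7 * u.b, u.c + 4 * u.a - 3 * u.a ^ 2⟩ := rfl

theorem sigma_apply (u : DerivedD5) :
    sigma u = ⟨u.a, 4 * u.a - u.b, -u.a - 3 * u.a ^ 2 - u.c⟩ := rfl

theorem autX_pow_three : autX ^ 3 = 1 := mulAutOfCube_pow_three ..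

theorem autY_pow_three : autY ^ 3 = 1 := mulAutOfCube_pow_three ..

theorem autX_autY (u : DerivedD5) : autX (autY u) = s₂⁻¹ * autY (autX u) * s₂ := by
  simp only [autX_apply, autY_apply, s₂, Heis.mul_def, Heis.inv_def, Heis.mk.injEq]
  refine ⟨?_, ?_, ?_⟩ <;> grind

theorem autX_sigma_autX (u : DerivedD5) : autX (sigma (autX u)) = sigma u := by
  simp only [autX_apply, sigma_apply, Heis.mk.injEq]
  refine ⟨?_, ?_, ?_⟩ <;> grind

theorem autY_sigma_autY (u : DerivedD5) : autY (sigma (autY u)) = sigma u := by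
  simp only [autY_apply, sigma_apply, Heis.mk.injEq]
  refine ⟨?_, ?_, ?_⟩ <;> grind

theorem sigma_involutive : Function.Involutive sigma := fun u ↦ by
  simp only [sigma_apply, Heis.ext_iff]
  refine ⟨?_, ?_, ?_⟩ <;> grind

theorem autX_W : autX W = W := by decide

theorem autY_W : autY W = W := by decide

theorem sigma_W : sigma W = W⁻¹ := by decide

theorem W_mem_center : W ∈ Subgroup.center DerivedD5 := Heis.mk_zero_zero_mem_center 1

theorem autY_yCube : autY yCube = yCube := by decide

theorem sigma_yCube : sigma yCube = yCube⁻¹ := by decide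

theorem yCube_mem_center : yCube ∈ Subgroup.center DerivedD5 :=
  Subgroup.mem_center_iff.2 fun u ↦ by
    simp only [yCube, Heis.mul_def, Heis.mk.injEq]
    refine ⟨?_, ?_, ?_⟩ <;> grind

theorem commutator_s₂_x : s₂⁻¹ * autX s₂ = s₃ := by decide
theorem commutator_s₃_x : s₃⁻¹ * autX s₃ = s₄ := by decide
theorem commutator_s₄_x : s₄⁻¹ * autX s₄ = s₅ := by decide

theorem eq_top_of_commutators_mem {D : Subgroup DerivedD5} (hs₂ : s₂ ∈ D)
    (hx : ∀ u ∈ D, u⁻¹ * autX u ∈ D) (hy : ∀ u ∈ D, u⁻¹ * autY u ∈ D) : D = ⊤ := by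
  have hs₃ : s₃ ∈ D := commutator_s₂_x ▸ hx s₂ hs₂
  have hW : W ∈ D := by
    rw [show W = s₃ ^ 2 * (s₂⁻¹ * autY s₂) by decide]
    exact D.mul_mem (D.pow_mem hs₃ 2) (hy s₂ hs₂)
  exact Heis.eq_top_of_generators_mem hs₂ hs₃ hW

theorem card_eq : Nat.card DerivedD5 = 3 ^ 6 := by
  rw [Heis.card_eq, Nat.card_zmod]
  norm_num

theorem card_commutator : Nat.card (commutator DerivedD5) = 3 := by
  have : Fact (Nat.Prime 3) := ⟨Nat.prime_three⟩
  rw [Heis.commutator_zmod_eq_zpowers, Nat.card_zpowers]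
  exact orderOf_eq_prime (by decide) (by decide)

end DerivedD5

/-- The subgroup of the cover group generated by its commutator subgroup and `y`. -/
abbrev ExtY : Type := CyclicExt DerivedD5.autY DerivedD5.yCube 3

namespace ExtY

open DerivedD5 (s₂ W)

/-- The inclusion of the commutator subgroup. -/
abbrev ι : DerivedD5 →* ExtY := CyclicExt.inc _ _ _

/-- The generator `y`. -/
abbrev y : ExtY := CyclicExt.gen _ _ _

theorem autY_pow_three_eq_conj :
    DerivedD5.autY ^ 3 = MulAut.conj DerivedD5.yCube⁻¹ := by
  rw [DerivedD5.autY_pow_three, conj_inv_eq_one_of_mem_center DerivedD5.yCube_mem_center]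

theorem ι_injective : Function.Injective ι :=
  CyclicExt.inc_injective DerivedD5.autY_yCube autY_pow_three_eq_conj

theorem card_eq : Nat.card ExtY = 3 ^ 7 := by
  rw [CyclicExt.card_eq DerivedD5.autY_yCube autY_pow_three_eq_conj, DerivedD5.card_eq, ← pow_succ]

/-- Conjugation by `x` as an endomorphism, with `y ↦ y * s₂` because `[y, x] = s₂`. -/
def actX : ExtY →* ExtY :=
  CyclicExt.lift (ι.comp DerivedD5.autX) (y * ι s₂)
    (fun n ↦ by
      simp only [MonoidHom.comp_apply, MonoidHom.coe_coe]
      rw [DerivedD5.autX_autY, map_mul, map_mul, ← CyclicExt.gen_conj_inc, map_inv]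
      group)
    (by
      rw [CyclicExt.gen_mul_inc_pow_three, CyclicExt.gen_pow, ← map_mul]
      exact congrArg ι (by decide))

@[simp]
theorem actX_ι (n : DerivedD5) : actX (ι n) = ι (DerivedD5.autX n) := CyclicExt.lift_inc ..

@[simp]
theorem actX_y : actX y = y * ι s₂ := CyclicExt.lift_gen ..

theorem actX_actX_actX (g : ExtY) : actX (actX (actX g)) = g := by
  suffices h : (actX.comp actX).comp actX = MonoidHom.id ExtY from DFunLike.congr_fun h g
  refine CyclicExt.hom_ext (MonoidHom.ext fun n ↦ ?_) ?_
  · simp only [MonoidHom.comp_apply, actX_ι, MonoidHom.id_apply]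
    exact congrArg ι (DFunLike.congr_fun DerivedD5.autX_pow_three n)
  · simp only [MonoidHom.comp_apply, actX_y, map_mul, actX_ι, MonoidHom.id_apply, mul_assoc]
    rw [← map_mul, ← map_mul, mul_eq_left]
    exact congrArg ι (by decide)

/-- Conjugation by `x`. -/
def autX : MulAut ExtY := mulAutOfCube actX actX_actX_actX

@[simp]
theorem autX_ι (n : DerivedD5) : autX (ι n) = ι (DerivedD5.autX n) := actX_ι n

@[simp]
theorem autX_y : autX y = y * ι s₂ := actX_y

theorem autX_pow_three : autX ^ 3 = 1 := mulAutOfCube_pow_three ..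

/-- The restriction of the automorphism inverting `x` and `y`. -/
def sigma : ExtY →* ExtY :=
  CyclicExt.reflect DerivedD5.sigma DerivedD5.autY_sigma_autY DerivedD5.sigma_yCube

theorem sigma_ι (n : DerivedD5) : sigma (ι n) = ι (DerivedD5.sigma n) :=
  CyclicExt.reflect_inc ..

theorem sigma_y : sigma y = y⁻¹ := CyclicExt.reflect_gen ..

theorem sigma_involutive : Function.Involutive sigma :=
  CyclicExt.reflect_involutive _ _ _ DerivedD5.sigma_involutive

theorem map_sigma_eq_inv {A : Type*} [CommGroup A] (F : ExtY →* A) (hF : ∀ n, F (ι n) = 1)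
    (g : ExtY) : F (sigma g) = (F g)⁻¹ :=
  CyclicExt.map_reflect_eq_inv _ _ _ F (fun n ↦ by rw [hF, hF, inv_one]) g

theorem autX_sigma_autX (g : ExtY) : autX (sigma (autX g)) = sigma g := by
  suffices h : (autX : ExtY →* ExtY).comp (sigma.comp autX) = sigma from DFunLike.congr_fun h g
  refine CyclicExt.hom_ext (MonoidHom.ext fun n ↦ ?_) ?_
  · simp only [MonoidHom.comp_apply, MonoidHom.coe_coe, autX_ι, sigma_ι,
      DerivedD5.autX_sigma_autX]
  · have h : y⁻¹ * ι (DerivedD5.autX (DerivedD5.sigma s₂)) * y = ι s₂ :=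
      (CyclicExt.gen_conj_inc ..).trans (congrArg ι (by decide))
    simp only [MonoidHom.comp_apply, MonoidHom.coe_coe, autX_y, map_mul, sigma_ι, sigma_y,
      map_inv, autX_ι, mul_inv_rev]
    rw [← h]
    group

theorem ι_W_mem_center : ι W ∈ Subgroup.center ExtY := by
  refine Subgroup.mem_center_iff.2 fun g ↦ ?_
  obtain ⟨n, k, rfl⟩ := CyclicExt.exists_eq_inc_mul_gen_zpow _ _ _ g
  have hn : Commute (ι n) (ι W) :=
    Commute.map (Subgroup.mem_center_iff.1 DerivedD5.W_mem_center n) ι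
  have hy : Commute y (ι W) := by
    rw [Commute, SemiconjBy, CyclicExt.inc_mul_gen, DerivedD5.autY_W]
  exact hn.mul_left (hy.zpow_left k)

theorem degree_autX (g : ExtY) :
    CyclicExt.degree _ _ _ (autX g) = CyclicExt.degree DerivedD5.autY DerivedD5.yCube 3 g := by
  suffices h : (CyclicExt.degree DerivedD5.autY DerivedD5.yCube 3).comp (autX : ExtY →* ExtY) =
    CyclicExt.degree _ _ _ from DFunLike.congr_fun h g
  refine CyclicExt.hom_ext (MonoidHom.ext fun n ↦ ?_) ?_
  · simp
  · simp

end ExtY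

/-- The cover group of type D.5, obtained from `ExtY` by adjoining `x` with `x ^ 3 ^ e = W ^ d`. -/
abbrev CoverD5 (d e : ℕ) : Type :=
  CyclicExt ExtY.autX (ExtY.ι (DerivedD5.W ^ d)) (3 ^ e)

namespace CoverD5

open DerivedD5 (autX autY s₂ s₃ s₄ s₅ W yCube)

variable (d e : ℕ)

/-- The inclusion of the commutator subgroup. -/
def incl : DerivedD5 →* CoverD5 d e := (CyclicExt.inc _ _ _).comp ExtY.ι

/-- The generator `x`. -/
def x : CoverD5 d e := CyclicExt.gen _ _ _

/-- The generator `y`. -/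
def y : CoverD5 d e := CyclicExt.inc _ _ _ ExtY.y

theorem autX_ι_W_pow : ExtY.autX (ExtY.ι (W ^ d)) = ExtY.ι (W ^ d) := by
  rw [ExtY.autX_ι, map_pow, DerivedD5.autX_W]

variable {e} in
theorem autX_pow_eq_conj (he : e ≠ 0) :
    ExtY.autX ^ 3 ^ e = MulAut.conj (ExtY.ι (W ^ d))⁻¹ := by
  rw [orderOf_dvd_iff_pow_eq_one.1
      ((orderOf_dvd_of_pow_eq_one ExtY.autX_pow_three).trans (dvd_pow_self 3 he)), map_pow,
    conj_inv_eq_one_of_mem_center (pow_mem ExtY.ι_W_mem_center d)]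

variable {e} in
theorem incl_injective (he : e ≠ 0) : Function.Injective (incl d e) :=
  (CyclicExt.inc_injective (autX_ι_W_pow d) (autX_pow_eq_conj d he)).comp ExtY.ι_injective

variable {e} in
theorem card_eq (he : e ≠ 0) : Nat.card (CoverD5 d e) = 3 ^ (7 + e) := by
  rw [CyclicExt.card_eq (autX_ι_W_pow d) (autX_pow_eq_conj d he), ExtY.card_eq, ← pow_add]

theorem x_pow : x d e ^ 3 ^ e = incl d e (W ^ d) := CyclicExt.gen_pow ..

theorem y_pow : y d e ^ 3 = incl d e yCube := by
  rw [y, ← map_pow, CyclicExt.gen_pow]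
  rfl

theorem comm'_y_x : comm' (y d e) (x d e) = incl d e s₂ := by
  rw [comm', mul_assoc, mul_assoc, ← mul_assoc (x d e)⁻¹, x, y, CyclicExt.gen_conj_inc,
    ExtY.autX_y, map_mul, inv_mul_cancel_left]
  rfl

theorem comm'_incl_x (u : DerivedD5) :
    comm' (incl d e u) (x d e) = incl d e (u⁻¹ * autX u) := by
  have h : (x d e)⁻¹ * incl d e u * x d e = incl d e (autX u) :=
    (CyclicExt.gen_conj_inc ..).trans (congrArg _ (ExtY.autX_ι u))
  rw [comm', mul_assoc, mul_assoc, ← mul_assoc (x d e)⁻¹, h, map_mul, map_inv]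

theorem comm'_incl_y (u : DerivedD5) :
    comm' (incl d e u) (y d e) = incl d e (u⁻¹ * autY u) := by
  have h : (y d e)⁻¹ * incl d e u * y d e = incl d e (autY u) := by
    rw [y, incl, MonoidHom.comp_apply, ← map_inv, ← map_mul, ← map_mul, CyclicExt.gen_conj_inc]
    rfl
  rw [comm', mul_assoc, mul_assoc, ← mul_assoc (y d e)⁻¹, h, map_mul, map_inv]

variable {d e}

theorem range_incl_le {D : Subgroup (CoverD5 d e)} (hyx : comm' (y d e) (x d e) ∈ D)
    (hx : ∀ g ∈ D, comm' g (x d e) ∈ D) (hy : ∀ g ∈ D, comm' g (y d e) ∈ D) :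
    (incl d e).range ≤ D := by
  have h : D.comap (incl d e) = ⊤ := by
    refine DerivedD5.eq_top_of_commutators_mem ?_ (fun u hu ↦ ?_) (fun u hu ↦ ?_)
    · rwa [Subgroup.mem_comap, ← comm'_y_x]
    · rw [Subgroup.mem_comap, ← comm'_incl_x]
      exact hx _ hu
    · rw [Subgroup.mem_comap, ← comm'_incl_y]
      exact hy _ hu
  rintro _ ⟨u, rfl⟩
  exact (Subgroup.eq_top_iff' _).1 h u

variable (d e)

theorem closure_eq_top : Subgroup.closure {x d e, y d e} = ⊤ := by
  set C := Subgroup.closure {x d e, y d e}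
  have hx : x d e ∈ C := Subgroup.subset_closure (by simp)
  have hy : y d e ∈ C := Subgroup.subset_closure (by simp)
  have hincl : (incl d e).range ≤ C :=
    range_incl_le (comm'_mem hy hx) (fun g hg ↦ comm'_mem hg hx) fun g hg ↦ comm'_mem hg hy
  have hinc : C.comap (CyclicExt.inc _ _ _) = ⊤ :=
    CyclicExt.eq_top_of_inc_mem_of_gen_mem (fun u ↦ hincl ⟨u, rfl⟩) hy
  exact CyclicExt.eq_top_of_inc_mem_of_gen_mem ((Subgroup.eq_top_iff' _).1 hinc) hx

theorem range_incl_le_commutator : (incl d e).range ≤ commutator (CoverD5 d e) :=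
  range_incl_le (comm'_mem_commutator _ _) (fun _ _ ↦ comm'_mem_commutator _ _)
    fun _ _ ↦ comm'_mem_commutator _ _

/-- The exponents of `x` and `y`. -/
def degreeXY : CoverD5 d e →* Multiplicative (ZMod (3 ^ e)) × Multiplicative (ZMod 3) :=
  CyclicExt.degreeProd (CyclicExt.degree autY yCube 3) ExtY.degree_autX
    (CyclicExt.degree_inc _)

theorem degreeXY_surjective : Function.Surjective (degreeXY d e) :=
  CyclicExt.degreeProd_surjective _ _ _ CyclicExt.degree_surjective

theorem ker_degreeXY : (degreeXY d e).ker = (incl d e).range := by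
  rw [degreeXY, CyclicExt.ker_degreeProd, CyclicExt.ker_degree, MonoidHom.map_range]
  rfl

theorem commutator_eq_range_incl : commutator (CoverD5 d e) = (incl d e).range :=
  le_antisymm
    ((Abelianization.commutator_subset_ker (degreeXY d e)).trans_eq (ker_degreeXY d e))
    (range_incl_le_commutator d e)

/-- The abelianization is generated by the images of `x`, of order `3 ^ e`, and `y`, of order
`3`. -/
noncomputable def abelianizationEquiv :
    Abelianization (CoverD5 d e) ≃* Multiplicative (ZMod (3 ^ e) × ZMod 3) :=
  (abelianizationEquivOfKerEq (degreeXY d e) (degreeXY_surjective d e)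
    ((ker_degreeXY d e).trans (commutator_eq_range_incl d e).symm)).trans
    (MulEquiv.prodMultiplicative _ _).symm

theorem derivedSeries_two :
    derivedSeries (CoverD5 d e) 2 = (commutator DerivedD5).map (incl d e) := by
  rw [derivedSeries_succ, derivedSeries_one, commutator_eq_range_incl, MonoidHom.range_eq_map,
    ← Subgroup.map_commutator, commutator_def]

theorem derivedSeries_three : derivedSeries (CoverD5 d e) 3 = ⊥ := by
  rw [derivedSeries_succ, derivedSeries_two, ← Subgroup.map_commutator,
    Subgroup.commutator_eq_bot_iff_le_centralizer.2
      (Heis.commutator_le_center.trans (Subgroup.center_le_centralizer _)), Subgroup.map_bot]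

variable {e} in
theorem card_derivedSeries_two (he : e ≠ 0) : Nat.card (derivedSeries (CoverD5 d e) 2) = 3 := by
  rw [derivedSeries_two, Subgroup.card_map_of_injective (incl_injective d he),
    DerivedD5.card_commutator]

theorem sigma_ι_W_pow : ExtY.sigma (ExtY.ι (W ^ d)) = (ExtY.ι (W ^ d))⁻¹ := by
  rw [ExtY.sigma_ι, map_pow, DerivedD5.sigma_W, inv_pow, map_inv]

/-- The automorphism inverting `x` and `y`. -/
def sigma : CoverD5 d e →* CoverD5 d e :=
  CyclicExt.reflect ExtY.sigma ExtY.autX_sigma_autX (sigma_ι_W_pow d)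

theorem sigma_involutive : Function.Involutive (sigma d e) :=
  CyclicExt.reflect_involutive _ _ _ ExtY.sigma_involutive

theorem isSigmaGroup : IsSigmaGroup (CoverD5 d e) := by
  have hincl (u : DerivedD5) : Abelianization.of (incl d e u) = 1 := by
    rw [← MonoidHom.mem_ker, Abelianization.ker_of]
    exact range_incl_le_commutator d e ⟨u, rfl⟩
  refine ⟨MulEquiv.ofBijective (sigma d e) (sigma_involutive d e).bijective, ?_⟩
  exact CyclicExt.map_reflect_eq_inv _ ExtY.autX_sigma_autX (sigma_ι_W_pow d) _
    (ExtY.map_sigma_eq_inv (Abelianization.of.comp (CyclicExt.inc _ _ _)) hincl)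

end CoverD5

/-- The ground state of type D.5, the second derived quotient of its cover. -/
abbrev GroundD5 (d e : ℕ) : Type := CoverD5 d e ⧸ derivedSeries (CoverD5 d e) 2

namespace GroundD5

open DerivedD5 (autX autY s₂ s₃ s₄ s₅ W yCube)

variable (d e : ℕ)

/-- The projection of the cover onto its second derived quotient. -/
abbrev mk : CoverD5 d e →* GroundD5 d e := QuotientGroup.mk' _

/-- The map onto the commutator subgroup of the ground state. -/
def incl : DerivedD5 →* GroundD5 d e := (mk d e).comp (CoverD5.incl d e)

/-- The generator `x`. -/
def x : GroundD5 d e := mk d e (CoverD5.x d e)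

/-- The generator `y`. -/
def y : GroundD5 d e := mk d e (CoverD5.y d e)

variable {d e} in
theorem incl_eq_incl {u v : DerivedD5} (h : u⁻¹ * v ∈ commutator DerivedD5) :
    incl d e u = incl d e v := by
  refine QuotientGroup.eq.2 ?_
  rw [CoverD5.derivedSeries_two, ← map_inv, ← map_mul]
  exact Subgroup.mem_map_of_mem _ h

theorem closure_eq_top : Subgroup.closure {x d e, y d e} = ⊤ := by
  rw [x, y, ← Set.image_pair, ← MonoidHom.map_closure, CoverD5.closure_eq_top,
    Subgroup.map_top_of_surjective _ (QuotientGroup.mk'_surjective _)]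

theorem x_pow : x d e ^ 3 ^ e = incl d e W ^ d := by
  rw [x, ← map_pow, CoverD5.x_pow]
  exact map_pow (incl d e) W d

theorem y_pow : y d e ^ 3 = incl d e yCube := by
  rw [y, ← map_pow, CoverD5.y_pow]
  rfl

theorem comm'_incl_x (u : DerivedD5) : comm' (incl d e u) (x d e) = incl d e (u⁻¹ * autX u) :=
  (map_comm' (mk d e) _ _).symm.trans (congrArg _ (CoverD5.comm'_incl_x d e u))

theorem comm'_incl_y (u : DerivedD5) : comm' (incl d e u) (y d e) = incl d e (u⁻¹ * autY u) :=
  (map_comm' (mk d e) _ _).symm.trans (congrArg _ (CoverD5.comm'_incl_y d e u))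

theorem sgen_two : sgen (x d e) (y d e) 2 = incl d e s₂ :=
  (map_comm' (mk d e) _ _).symm.trans (congrArg _ (CoverD5.comm'_y_x d e))

theorem sgen_three : sgen (x d e) (y d e) 3 = incl d e s₃ := by
  rw [sgen, sgen_two, comm'_incl_x, DerivedD5.commutator_s₂_x]

theorem sgen_four : sgen (x d e) (y d e) 4 = incl d e s₄ := by
  rw [sgen, sgen_three, comm'_incl_x, DerivedD5.commutator_s₃_x]

theorem sgen_five : sgen (x d e) (y d e) 5 = incl d e s₅ := by
  rw [sgen, sgen_four, comm'_incl_x, DerivedD5.commutator_s₄_x]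

theorem incl_W_pow_three : incl d e W ^ 3 = 1 := by
  rw [← map_pow, ← map_one (incl d e)]
  exact incl_eq_incl (Heis.mem_commutator_iff.2 ⟨by decide, by decide, 8, by decide⟩)

theorem x_pow_pow_three : (x d e ^ 3 ^ e) ^ 3 = 1 := by
  rw [x_pow, pow_right_comm, incl_W_pow_three, one_pow]

theorem y_pow_three : y d e ^ 3 = sgen (x d e) (y d e) 5 ^ 2 := by
  rw [y_pow, sgen_five, ← map_pow]
  exact congrArg _ (by decide)

theorem sgen_two_pow_three :
    sgen (x d e) (y d e) 2 ^ 3 = sgen (x d e) (y d e) 4 ^ 2 * sgen (x d e) (y d e) 5 := by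
  rw [sgen_two, sgen_four, sgen_five, ← map_pow, ← map_pow, ← map_mul]
  exact incl_eq_incl (Heis.mem_commutator_iff.2 ⟨by decide, by decide, 1, by decide⟩)

theorem sgen_three_pow_three : sgen (x d e) (y d e) 3 ^ 3 = sgen (x d e) (y d e) 5 ^ 2 := by
  rw [sgen_three, sgen_five, ← map_pow, ← map_pow]
  exact congrArg _ (by decide)

variable {d} in
theorem tgenD_three (hd : ¬ 3 ∣ d) :
    tgenD (x d e) (y d e) 3 =
      sgen (x d e) (y d e) 3 * sgen (x d e) (y d e) 5 * (x d e ^ 3 ^ e) ^ d := by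
  have hdd : d * d ≡ 1 [MOD 3] := by
    rcases (by omega : d % 3 = 1 ∨ d % 3 = 2) with h | h <;> simp [Nat.ModEq, Nat.mul_mod, h]
  have hW : incl d e W ^ (d * d) = incl d e W := by
    conv_rhs => rw [← pow_one (incl d e W)]
    exact pow_eq_pow_iff_modEq.2 (hdd.of_dvd (orderOf_dvd_of_pow_eq_one (incl_W_pow_three d e)))
  rw [tgenD, sgen_two, sgen_three, sgen_five, comm'_incl_y, x_pow, ← pow_mul, hW,
    ← map_mul, ← map_mul]
  exact congrArg _ (by decide)

theorem tgenD_four : tgenD (x d e) (y d e) 4 = sgen (x d e) (y d e) 4 := by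
  rw [tgenD, sgen_three, sgen_four, comm'_incl_y]
  exact incl_eq_incl (Heis.mem_commutator_iff.2 ⟨by decide, by decide, 2, by decide⟩)

theorem tgenD_five : tgenD (x d e) (y d e) 5 = sgen (x d e) (y d e) 5 := by
  rw [tgenD, sgen_four, sgen_five, comm'_incl_y]
  exact incl_eq_incl (Heis.mem_commutator_iff.2 ⟨by decide, by decide, 1, by decide⟩)

variable {e} in
theorem card_eq (he : e ≠ 0) : Nat.card (GroundD5 d e) = 3 ^ (6 + e) := by
  have h := Subgroup.card_eq_card_quotient_mul_card_subgroup (derivedSeries (CoverD5 d e) 2)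
  rw [CoverD5.card_eq d he, CoverD5.card_derivedSeries_two d he,
    show 3 ^ (7 + e) = 3 ^ (6 + e) * 3 by ring] at h
  exact (Nat.eq_of_mul_eq_mul_right three_pos h).symm

theorem isMetabelian : IsMetabelian (GroundD5 d e) := derivedSeries_quotient_derivedSeries 2

theorem isSigmaGroup : IsSigmaGroup (GroundD5 d e) := (CoverD5.isSigmaGroup d e).quotient _

/-- Passing to the second derived quotient does not change the abelianization. -/
noncomputable def abelianizationEquiv :
    Abelianization (GroundD5 d e) ≃* Multiplicative (ZMod (3 ^ e) × ZMod 3) :=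
  (abelianizationQuotientEquiv _ <| (derivedSeries_antitone _ one_le_two).trans_eq
    (derivedSeries_one _)).trans (CoverD5.abelianizationEquiv d e)

end GroundD5

theorem stmt10_general (e d : ℕ) (he : e ≠ 0) (hd : ¬ 3 ∣ d) :
    ∃ (M : Type) (_ : Group M) (_ : Finite M) (x y : M),
      Subgroup.closure {x, y} = ⊤ ∧
      Nat.card M = 3 ^ (6 + e) ∧
      IsMetabelian M ∧
      IsSigmaGroup M ∧
      (x ^ 3 ^ e) ^ 3 = 1 ∧
      y ^ 3 = sgen x y 5 ^ 2 ∧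
      sgen x y 2 ^ 3 = sgen x y 4 ^ 2 * sgen x y 5 ∧
      sgen x y 3 ^ 3 = sgen x y 5 ^ 2 ∧
      tgenD x y 3 = sgen x y 3 * sgen x y 5 * (x ^ 3 ^ e) ^ d ∧
      tgenD x y 4 = sgen x y 4 ∧
      tgenD x y 5 = sgen x y 5 ∧
      Nonempty (Abelianization M ≃* Multiplicative (ZMod (3 ^ e) × ZMod 3)) ∧
      ∃ (G : Type) (_ : Group G) (_ : Finite G),
        Nat.card G = 3 ^ (7 + e) ∧
        Nonempty (Abelianization G ≃* Multiplicative (ZMod (3 ^ e) × ZMod 3)) ∧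
        IsSigmaGroup G ∧
        derivedSeries G 2 ≠ ⊥ ∧
        derivedSeries G 3 = ⊥ ∧
        ∃ φ : G →* M, Function.Surjective φ ∧ φ.ker = derivedSeries G 2 := by
  have finite_G : Finite (CoverD5 d e) :=
    Nat.finite_of_card_ne_zero (by rw [CoverD5.card_eq d he]; positivity)
  have derivedSeries_two_ne_bot : derivedSeries (CoverD5 d e) 2 ≠ ⊥ := fun h ↦ by
    have hcard := CoverD5.card_derivedSeries_two d he
    rw [h, Subgroup.card_bot] at hcard
    omega
  exact ⟨GroundD5 d e, inferInstance, inferInstance, GroundD5.x d e, GroundD5.y d e,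
    GroundD5.closure_eq_top d e, GroundD5.card_eq d he, GroundD5.isMetabelian d e,
    GroundD5.isSigmaGroup d e, GroundD5.x_pow_pow_three d e, GroundD5.y_pow_three d e,
    GroundD5.sgen_two_pow_three d e, GroundD5.sgen_three_pow_three d e,
    GroundD5.tgenD_three e hd, GroundD5.tgenD_four d e, GroundD5.tgenD_five d e,
    ⟨GroundD5.abelianizationEquiv d e⟩,
    CoverD5 d e, inferInstance, finite_G, CoverD5.card_eq d he,
    ⟨CoverD5.abelianizationEquiv d e⟩, CoverD5.isSigmaGroup d e, derivedSeries_two_ne_bot,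
    CoverD5.derivedSeries_three d e,
    GroundD5.mk d e, QuotientGroup.mk'_surjective _, QuotientGroup.ker_mk' _⟩

theorem stmt10 (e i : ℕ) (he : 5 ≤ e) (hi : i = 2 ∨ i = 3) :
    ∃ (M : Type) (_ : Group M) (_ : Finite M) (x y : M),
      Subgroup.closure {x, y} = ⊤ ∧
      Nat.card M = 3 ^ (6 + e) ∧
      IsMetabelian M ∧
      IsSigmaGroup M ∧
      (x ^ 3 ^ e) ^ 3 = 1 ∧
      y ^ 3 = sgen x y 5 ^ 2 ∧
      sgen x y 2 ^ 3 = sgen x y 4 ^ 2 * sgen x y 5 ∧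
      sgen x y 3 ^ 3 = sgen x y 5 ^ 2 ∧
      tgenD x y 3 = sgen x y 3 * sgen x y 5 * (x ^ 3 ^ e) ^ (i - 1) ∧
      tgenD x y 4 = sgen x y 4 ∧
      tgenD x y 5 = sgen x y 5 ∧
      Nonempty (Abelianization M ≃* Multiplicative (ZMod (3 ^ e) × ZMod 3)) ∧
      ∃ (G : Type) (_ : Group G) (_ : Finite G),
        Nat.card G = 3 ^ (7 + e) ∧
        Nonempty (Abelianization G ≃* Multiplicative (ZMod (3 ^ e) × ZMod 3)) ∧
        IsSigmaGroup G ∧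
        derivedSeries G 2 ≠ ⊥ ∧
        derivedSeries G 3 = ⊥ ∧
        ∃ φ : G →* M, Function.Surjective φ ∧ φ.ker = derivedSeries G 2 :=
  stmt10_general e (i - 1) (by omega) (by omega)
end
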